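/- arXiv:1302.5523 — 14 statements merged into one kernel-verified Lean document; each statement's English description precedes it below -/
import Mathlib

section
/- The map λ ↦ ∫_{p₀}^0 (λ − 2Γ(p))^{−3/2} dp is strictly decreasing on (2Γ_max, ∞), tends to 0 as λ → ∞, and tends to ∞ as λ decreases to 2Γ_max. Consequently, there exists a unique λ₀ ∈ (2Γ_max, ∞) such that g·∫_{p₀}^0 (λ₀ − 2Γ(p))^{−3/2} dp = 1. -/
open Set Filter

lemma aux_cont {p₀ : ℝ} {Γ : ℝ → ℝ} {M : ℝ} (hc : ContinuousOn Γ (Icc p₀ 0))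
    (hM : ∀ p ∈ Icc p₀ 0, Γ p ≤ M) {lam : ℝ} (hl : 2 * M < lam) :
    ContinuousOn (fun p => (lam - 2 * Γ p) ^ (-(3 : ℝ) / 2)) (Icc p₀ 0) := by
  apply ContinuousOn.rpow_const
  · exact continuousOn_const.sub (continuousOn_const.mul hc)
  · intro p hp
    left
    have := hM p hp
    linarith

lemma aux_anti {p₀ : ℝ} (hp₀ : p₀ < 0) {Γ : ℝ → ℝ} {M : ℝ} (hc : ContinuousOn Γ (Icc p₀ 0))
    (hM : ∀ p ∈ Icc p₀ 0, Γ p ≤ M) :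
    StrictAntiOn (fun lam : ℝ => ∫ p in p₀..0, (lam - 2 * Γ p) ^ (-(3 : ℝ) / 2))
      (Ioi (2 * M)) := by
  intro a ha b hb hab
  have ha' : 2 * M < a := ha
  have key : ∀ p ∈ Icc p₀ 0, (b - 2 * Γ p) ^ (-(3 : ℝ) / 2) < (a - 2 * Γ p) ^ (-(3 : ℝ) / 2) := by
    intro p hp
    have := hM p hp
    exact Real.rpow_lt_rpow_of_neg (by linarith) (by linarith) (by norm_num)
  refine intervalIntegral.integral_lt_integral_of_continuousOn_of_le_of_exists_lt hp₀
    (aux_cont hc hM hb) (aux_cont hc hM ha) ?_ ?_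
  · intro p hp
    exact (key p (Ioc_subset_Icc_self hp)).le
  · exact ⟨0, ⟨hp₀.le, le_rfl⟩, key 0 ⟨hp₀.le, le_rfl⟩⟩

lemma aux_zero {p₀ : ℝ} (hp₀ : p₀ < 0) {Γ : ℝ → ℝ} {M : ℝ} (hc : ContinuousOn Γ (Icc p₀ 0))
    (hM : ∀ p ∈ Icc p₀ 0, Γ p ≤ M) :
    Tendsto (fun lam : ℝ => ∫ p in p₀..0, (lam - 2 * Γ p) ^ (-(3 : ℝ) / 2)) atTop (nhds 0) := by
  have h1 : Tendsto (fun lam : ℝ => (0 - p₀) * (lam - 2 * M) ^ (-((3 : ℝ) / 2))) atTop (nhds 0) := by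
    have h2 : Tendsto (fun lam : ℝ => lam - 2 * M) atTop atTop :=
      tendsto_atTop_add_const_right _ _ tendsto_id
    have := ((tendsto_rpow_neg_atTop (y := (3 : ℝ) / 2) (by norm_num)).comp h2).const_mul (0 - p₀)
    simpa using this
  refine tendsto_of_tendsto_of_tendsto_of_le_of_le' tendsto_const_nhds h1 ?_ ?_
  · filter_upwards [eventually_gt_atTop (2 * M)] with lam hl
    apply intervalIntegral.integral_nonneg hp₀.le
    intro p hp
    have := hM p hp
    exact Real.rpow_nonneg (by linarith) _
  · filter_upwards [eventually_gt_atTop (2 * M)] with lam hl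
    have h3 : ∫ p in p₀..0, (lam - 2 * Γ p) ^ (-(3 : ℝ) / 2)
        ≤ ∫ p in p₀..0, (lam - 2 * M) ^ (-((3 : ℝ) / 2)) := by
      apply intervalIntegral.integral_mono_on hp₀.le
      · exact (aux_cont hc hM hl).intervalIntegrable_of_Icc hp₀.le
      · exact intervalIntegrable_const
      · intro p hp
        have := hM p hp
        rw [neg_div]
        exact Real.rpow_le_rpow_of_nonpos (by linarith) (by linarith) (by norm_num)
    simpa using h3

lemma aux_contF {p₀ : ℝ} (hp₀ : p₀ < 0) {Γ : ℝ → ℝ} {M : ℝ} (hc : ContinuousOn Γ (Icc p₀ 0))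
    (hM : ∀ p ∈ Icc p₀ 0, Γ p ≤ M) :
    ContinuousOn (fun lam : ℝ => ∫ p in p₀..0, (lam - 2 * Γ p) ^ (-(3 : ℝ) / 2))
      (Ioi (2 * M)) := by
  intro l hl
  have hl' : 2 * M < l := hl
  apply ContinuousAt.continuousWithinAt
  obtain ⟨a, ha, hal⟩ := exists_between hl'
  have sub : uIoc p₀ 0 ⊆ Icc p₀ 0 := by
    rw [uIoc_of_le hp₀.le]; exact Ioc_subset_Icc_self
  apply intervalIntegral.continuousAt_of_dominated_interval
    (bound := fun _ => (a - 2 * M) ^ (-(3 : ℝ) / 2))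
  · filter_upwards [lt_mem_nhds hl'] with x hx
    exact ((aux_cont hc hM hx).mono sub).aestronglyMeasurable measurableSet_uIoc
  · filter_upwards [lt_mem_nhds hal] with x hx
    refine Eventually.of_forall fun p hp => ?_
    have := hM p (sub hp)
    rw [Real.norm_of_nonneg (Real.rpow_nonneg (by linarith) _)]
    exact Real.rpow_le_rpow_of_nonpos (by linarith) (by linarith) (by norm_num)
  · exact intervalIntegrable_const
  · refine Eventually.of_forall fun p hp => ?_
    have := hM p (sub hp)
    apply ContinuousAt.rpow_const
    · fun_prop
    · left; linarith

lemma aux_top {p₀ : ℝ} (hp₀ : p₀ < 0) {Γ : ℝ → ℝ} {K : NNReal}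
    (hΓ : LipschitzOnWith K Γ (Icc p₀ 0)) {q : ℝ} (hq : q ∈ Icc p₀ 0)
    (hM : ∀ p ∈ Icc p₀ 0, Γ p ≤ Γ q) :
    Tendsto (fun lam : ℝ => ∫ p in p₀..0, (lam - 2 * Γ p) ^ (-(3 : ℝ) / 2))
      (nhdsWithin (2 * Γ q) (Ioi (2 * Γ q))) atTop := by
  have hc := hΓ.continuousOn
  have hC : (0 : ℝ) < 1 + 2 * K := by positivity
  have h0 : Tendsto (fun lam : ℝ => lam - 2 * Γ q) (nhdsWithin (2 * Γ q) (Ioi (2 * Γ q)))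
      (nhdsWithin 0 (Ioi 0)) := by
    apply tendsto_nhdsWithin_iff.2
    constructor
    · have : Tendsto (fun lam : ℝ => lam - 2 * Γ q) (nhds (2 * Γ q)) (nhds (2 * Γ q - 2 * Γ q)) :=
        (continuous_id.sub continuous_const).tendsto _
      rw [sub_self] at this
      exact this.mono_left nhdsWithin_le_nhds
    · filter_upwards [self_mem_nhdsWithin] with x hx
      exact sub_pos.2 (mem_Ioi.1 hx)
  have h1 : Tendsto (fun lam : ℝ => (1 + 2 * (K : ℝ)) ^ (-(3 : ℝ) / 2) *
      (lam - 2 * Γ q) ^ (-(1 : ℝ) / 2)) (nhdsWithin (2 * Γ q) (Ioi (2 * Γ q))) atTop := by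
    apply Tendsto.const_mul_atTop (Real.rpow_pos_of_pos hC _)
    exact (tendsto_rpow_neg_nhdsGT_zero (by norm_num)).comp h0
  refine tendsto_atTop_mono' _ ?_ h1
  have hsm : ∀ᶠ lam in nhdsWithin (2 * Γ q) (Ioi (2 * Γ q)), lam < 2 * Γ q + (-p₀) / 2 :=
    nhdsWithin_le_nhds (gt_mem_nhds (by linarith))
  filter_upwards [self_mem_nhdsWithin, hsm] with lam hl hl2
  have hl' : 2 * Γ q < lam := hl
  set e := lam - 2 * Γ q with he
  have hepos : 0 < e := by linarith
  obtain ⟨c, hc1, hc2, hc3, hc4⟩ : ∃ c, p₀ ≤ c ∧ c + e ≤ 0 ∧ c ≤ q ∧ q ≤ c + e := by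
    by_cases h : q + e ≤ 0
    · exact ⟨q, hq.1, h, le_rfl, by linarith⟩
    · exact ⟨q - e, by linarith, by linarith [hq.2], by linarith, by linarith⟩
  have hsub : Icc c (c + e) ⊆ Icc p₀ 0 := Icc_subset_Icc hc1 hc2
  have hint : IntervalIntegrable (fun p => (lam - 2 * Γ p) ^ (-(3 : ℝ) / 2))
      MeasureTheory.volume p₀ 0 := (aux_cont hc hM hl').intervalIntegrable_of_Icc hp₀.le
  have hA : ∫ p in c..(c + e), (lam - 2 * Γ p) ^ (-(3 : ℝ) / 2) ≤
      ∫ p in p₀..0, (lam - 2 * Γ p) ^ (-(3 : ℝ) / 2) := by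
    apply intervalIntegral.integral_mono_interval hc1 (by linarith) hc2 _ hint
    filter_upwards [MeasureTheory.ae_restrict_mem measurableSet_Ioc] with p hp
    have := hM p (Ioc_subset_Icc_self hp)
    exact Real.rpow_nonneg (by linarith) _
  have hB : ∫ p in c..(c + e), ((1 + 2 * (K : ℝ)) * e) ^ (-(3 : ℝ) / 2) ≤
      ∫ p in c..(c + e), (lam - 2 * Γ p) ^ (-(3 : ℝ) / 2) := by
    apply intervalIntegral.integral_mono_on (by linarith) intervalIntegrable_const
    · exact ((aux_cont hc hM hl').mono hsub).intervalIntegrable_of_Icc (by linarith)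
    · intro p hp
      have h2 := hM p (hsub hp)
      have h3 := hΓ.dist_le_mul q hq p (hsub hp)
      rw [Real.dist_eq, Real.dist_eq] at h3
      have h4 : |q - p| ≤ e := abs_le.2 ⟨by linarith [hp.2], by linarith [hp.1]⟩
      have h5 := mul_le_mul_of_nonneg_left h4 K.coe_nonneg
      have h6 := le_abs_self (Γ q - Γ p)
      exact Real.rpow_le_rpow_of_nonpos (by linarith) (by linarith) (by norm_num)
  refine le_trans (le_of_eq ?_) (hB.trans hA)
  rw [intervalIntegral.integral_const, Real.mul_rpow hC.le hepos.le, smul_eq_mul]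
  have : e ^ (-(1 : ℝ) / 2) = e * e ^ (-(3 : ℝ) / 2) := by
    rw [← Real.rpow_one_add' hepos.le (by norm_num)]
    norm_num
  rw [this]
  ring

/-- The map `λ ↦ ∫_{p₀}^0 (λ − 2Γ(p))^{−3/2} dp` is strictly decreasing on
`(2Γ_max, ∞)`, tends to `0` as `λ → ∞`, and tends to `∞` as `λ` decreases to `2Γ_max`.
Consequently, there exists a unique `λ₀ ∈ (2Γ_max, ∞)` with
`g·∫_{p₀}^0 (λ₀ − 2Γ(p))^{−3/2} dp = 1`. -/
theorem stmt_0 (p₀ g : ℝ) (hp₀ : p₀ < 0) (hg : 0 < g)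
    (Γ : ℝ → ℝ) (K : NNReal) (hΓ : LipschitzOnWith K Γ (Set.Icc p₀ 0)) :
    StrictAntiOn (fun lam : ℝ => ∫ p in p₀..0, (lam - 2 * Γ p) ^ (-(3 : ℝ) / 2))
      (Set.Ioi (2 * sSup (Γ '' Set.Icc p₀ 0))) ∧
    Tendsto (fun lam : ℝ => ∫ p in p₀..0, (lam - 2 * Γ p) ^ (-(3 : ℝ) / 2))
      atTop (nhds 0) ∧
    Tendsto (fun lam : ℝ => ∫ p in p₀..0, (lam - 2 * Γ p) ^ (-(3 : ℝ) / 2))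
      (nhdsWithin (2 * sSup (Γ '' Set.Icc p₀ 0)) (Set.Ioi (2 * sSup (Γ '' Set.Icc p₀ 0))))
      atTop ∧
    ∃! lam₀ : ℝ, lam₀ ∈ Set.Ioi (2 * sSup (Γ '' Set.Icc p₀ 0)) ∧
      g * ∫ p in p₀..0, (lam₀ - 2 * Γ p) ^ (-(3 : ℝ) / 2) = 1 := by
  have hne : (Icc p₀ 0).Nonempty := ⟨0, hp₀.le, le_rfl⟩
  obtain ⟨q, hq, hqM, hmax⟩ := isCompact_Icc.exists_sSup_image_eq_and_ge hne hΓ.continuousOn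
  rw [hqM]
  have hc := hΓ.continuousOn
  have hanti := aux_anti hp₀ hc hmax
  have hzero := aux_zero hp₀ hc hmax
  have htop := aux_top hp₀ hΓ hq hmax
  refine ⟨hanti, hzero, htop, ?_⟩
  obtain ⟨a, ha1, ha2⟩ := ((htop.eventually (eventually_ge_atTop (1 / g))).and
    self_mem_nhdsWithin).exists
  obtain ⟨b, hb1, hb2⟩ := ((hzero.eventually (gt_mem_nhds (one_div_pos.2 hg))).and
    (eventually_gt_atTop (2 * Γ q))).exists
  obtain ⟨l, hl, hl2⟩ := isPreconnected_Ioi.intermediate_value (show b ∈ Ioi (2 * Γ q) from hb2) ha2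
    (aux_contF hp₀ hc hmax) ⟨hb1.le, ha1⟩
  refine ⟨l, ⟨hl, ?_⟩, ?_⟩
  · simp only at hl2
    rw [hl2]
    field_simp
  · rintro y ⟨hy, hy2⟩
    apply hanti.injOn hy hl
    simp only at hl2 ⊢
    rw [hl2]
    field_simp
    linarith
end

section
/- Let p₀ < p₁ < 0 and γ₁, γ₂ ∈ ℝ, and define Γ : [p₀,0] → ℝ by Γ(p) := γ₂ p for p ∈ [p₁,0] and Γ(p) := γ₂ p₁ + γ₁(p − p₁) for p ∈ [p₀,p₁]. For λ > 2 max_{[p₀,0]} Γ define H(p) := ∫_{p₀}^p (λ − 2Γ(s))^{−1/2} ds for p ∈ [p₀,0]. Then H is continuously differentiable on [p₀,0] with H(p₀) = 0, H is twice differentiable on (p₀,p₁) with H″ = γ₁ (H′)³ there, H is twice differentiable on (p₁,0) with H″ = γ₂ (H′)³ there, and for Q ∈ ℝ the equation 1 + (2g·H(0) − Q)·H′(0)² = 0 holds if and only if Q = λ + 2g·∫_{p₀}^0 (λ − 2Γ(p))^{−1/2} dp. -/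
open Set

/-- For the two-layer piecewise linear `Γ` and `λ > 2 max Γ`, the function
`H(p) := ∫_{p₀}^p (λ − 2Γ(s))^{−1/2} ds` is `C¹` on `[p₀,0]` with `H(p₀) = 0`, satisfies
`H″ = γ₁ (H′)³` on `(p₀,p₁)` and `H″ = γ₂ (H′)³` on `(p₁,0)`, and for `Q ∈ ℝ` one has
`1 + (2g·H(0) − Q)·H′(0)² = 0` iff `Q = λ + 2g·∫_{p₀}^0 (λ − 2Γ(p))^{−1/2} dp`. -/
theorem stmt_1 (g p₀ p₁ γ₁ γ₂ lam : ℝ) (hg : 0 < g) (h01 : p₀ < p₁) (h10 : p₁ < 0)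
    (Γ : ℝ → ℝ)
    (hΓ₂ : ∀ p ∈ Set.Icc p₁ (0 : ℝ), Γ p = γ₂ * p)
    (hΓ₁ : ∀ p ∈ Set.Icc p₀ p₁, Γ p = γ₂ * p₁ + γ₁ * (p - p₁))
    (hlam : 2 * sSup (Γ '' Set.Icc p₀ 0) < lam) :
    (∫ s in p₀..p₀, (Real.sqrt (lam - 2 * Γ s))⁻¹) = 0 ∧
    (∀ p ∈ Set.Icc p₀ (0 : ℝ),
      HasDerivWithinAt (fun t => ∫ s in p₀..t, (Real.sqrt (lam - 2 * Γ s))⁻¹)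
        ((Real.sqrt (lam - 2 * Γ p))⁻¹) (Set.Icc p₀ 0) p) ∧
    ContinuousOn (fun p => (Real.sqrt (lam - 2 * Γ p))⁻¹) (Set.Icc p₀ 0) ∧
    (∀ p ∈ Set.Ioo p₀ p₁,
      HasDerivAt (fun t => (Real.sqrt (lam - 2 * Γ t))⁻¹)
        (γ₁ * ((Real.sqrt (lam - 2 * Γ p))⁻¹) ^ 3) p) ∧
    (∀ p ∈ Set.Ioo p₁ (0 : ℝ),
      HasDerivAt (fun t => (Real.sqrt (lam - 2 * Γ t))⁻¹)
        (γ₂ * ((Real.sqrt (lam - 2 * Γ p))⁻¹) ^ 3) p) ∧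
    (∀ Q : ℝ,
      1 + (2 * g * (∫ s in p₀..0, (Real.sqrt (lam - 2 * Γ s))⁻¹) - Q)
          * ((Real.sqrt (lam - 2 * Γ 0))⁻¹) ^ 2 = 0 ↔
        Q = lam + 2 * g * ∫ s in p₀..0, (Real.sqrt (lam - 2 * Γ s))⁻¹) := by
  have hΓ : ∀ p ∈ Set.Icc p₀ (0 : ℝ), Γ p = γ₂ * max p p₁ + γ₁ * (min p p₁ - p₁) := by
    intro p hp
    rcases le_total p p₁ with h | h
    · rw [max_eq_right h, min_eq_left h]
      exact hΓ₁ p ⟨hp.1, h⟩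
    · rw [max_eq_left h, min_eq_right h, hΓ₂ p ⟨h, hp.2⟩]
      ring
  have hcΓ : ContinuousOn Γ (Set.Icc p₀ 0) := by
    refine ContinuousOn.congr (Continuous.continuousOn ?_) hΓ
    fun_prop
  have hpos : ∀ p ∈ Set.Icc p₀ (0 : ℝ), 0 < lam - 2 * Γ p := by
    intro p hp
    have hb : BddAbove (Γ '' Set.Icc p₀ 0) := (isCompact_Icc.image_of_continuousOn hcΓ).bddAbove
    have := le_csSup hb (Set.mem_image_of_mem Γ hp)
    linarith
  have hcf : ContinuousOn (fun p => (Real.sqrt (lam - 2 * Γ p))⁻¹) (Set.Icc p₀ 0) := by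
    refine ContinuousOn.inv₀ ?_ fun p hp => (Real.sqrt_pos.2 (hpos p hp)).ne'
    exact (continuousOn_const.sub (continuousOn_const.mul hcΓ)).sqrt
  have key : ∀ (c p : ℝ), 0 < lam - 2 * Γ p → HasDerivAt Γ c p →
      HasDerivAt (fun t => (Real.sqrt (lam - 2 * Γ t))⁻¹)
        (c * ((Real.sqrt (lam - 2 * Γ p))⁻¹) ^ 3) p := by
    intro c p hp hd
    have hs := Real.sqrt_pos.2 hp
    have h := (((hd.const_mul 2).const_sub lam).sqrt hp.ne').fun_inv hs.ne'
    refine h.congr_deriv ?_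
    generalize Real.sqrt (lam - 2 * Γ p) = r at hs
    have := hs.ne'
    field_simp
  refine ⟨intervalIntegral.integral_same, ?_, hcf, ?_, ?_, ?_⟩
  · intro p hp
    haveI : Fact (p ∈ Set.Icc p₀ (0 : ℝ)) := ⟨hp⟩
    refine intervalIntegral.integral_hasDerivWithinAt_right (s := Set.Icc p₀ 0)
      (t := Set.Icc p₀ 0) ?_ ?_ (hcf p hp)
    · apply ContinuousOn.intervalIntegrable
      rw [Set.uIcc_of_le hp.1]
      exact hcf.mono (Set.Icc_subset_Icc_right hp.2)
    · exact hcf.stronglyMeasurableAtFilter_nhdsWithin measurableSet_Icc p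
  · intro p hp
    refine key γ₁ p (hpos p ⟨hp.1.le, (hp.2.trans h10).le⟩) ?_
    have h : HasDerivAt (fun t => γ₂ * p₁ + γ₁ * (t - p₁)) γ₁ p := by
      simpa using (((hasDerivAt_id p).sub_const p₁).const_mul γ₁).const_add (γ₂ * p₁)
    refine h.congr_of_eventuallyEq ?_
    filter_upwards [Icc_mem_nhds hp.1 hp.2] with t ht using hΓ₁ t ht
  · intro p hp
    refine key γ₂ p (hpos p ⟨(h01.trans hp.1).le, hp.2.le⟩) ?_
    have h : HasDerivAt (fun t => γ₂ * t) γ₂ p := by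
      simpa using (hasDerivAt_id p).const_mul γ₂
    refine h.congr_of_eventuallyEq ?_
    filter_upwards [Icc_mem_nhds hp.1 hp.2] with t ht using hΓ₂ t ht
  · intro Q
    have h0 : Γ 0 = 0 := by simpa using hΓ₂ 0 ⟨h10.le, le_rfl⟩
    have hl : 0 < lam := by simpa [h0] using hpos 0 ⟨(h01.trans h10).le, le_rfl⟩
    generalize (∫ s in p₀..0, (Real.sqrt (lam - 2 * Γ s))⁻¹) = I
    rw [h0, inv_pow, mul_zero, sub_zero, Real.sq_sqrt hl.le]
    field_simp
    constructor <;> intro h <;> linarith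
end

section
/- Suppose z : [p₀,0] → ℝ is C¹ with z(p₀) = 0, z′(p₀) = 1, and p ↦ b(p)³z′(p) is differentiable on (p₀,0) with derivative μ·b·z; suppose v : [p₀,0] → ℝ is C¹ with v(0) = λ^{3/2}, v′(0) = g + σμ, and p ↦ b(p)³v′(p) is differentiable on (p₀,0) with derivative μ·b·v. Then there exists a not-identically-zero C¹ function w : [p₀,0] → ℝ with w(p₀) = 0, (g + σμ)·w(0) = λ^{3/2}·w′(0), and such that p ↦ b(p)³w′(p) is differentiable on (p₀,0) with derivative μ·b·w, if and only if z and v are linearly dependent. -/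
open Set

lemma uniq_aux (p₀ μ : ℝ) (hμ : 0 ≤ μ)
    (b : ℝ → ℝ) (hb : ContinuousOn b (Set.Icc p₀ 0)) (hbpos : ∀ p ∈ Set.Icc p₀ 0, 0 < b p)
    (w w' : ℝ → ℝ)
    (hw : ∀ p ∈ Set.Icc p₀ 0, HasDerivWithinAt w (w' p) (Set.Icc p₀ 0) p)
    (hwc : ContinuousOn w' (Set.Icc p₀ 0))
    (hode : ∀ p ∈ Set.Ioo p₀ 0,
      HasDerivAt (fun s => b s ^ 3 * w' s) (μ * b p * w p) p)
    (q : ℝ) (hq : q ∈ Set.Icc p₀ 0) (h0 : w q = 0) (h1 : w' q = 0) :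
    ∀ p ∈ Set.Icc p₀ 0, w p = 0 := by
  obtain ⟨C, hC⟩ : ∃ C, ∀ p ∈ Set.Icc p₀ 0, (b p ^ 3)⁻¹ + μ * b p ≤ C := by
    have hc : ContinuousOn (fun p => (b p ^ 3)⁻¹ + μ * b p) (Set.Icc p₀ 0) := by
      refine ((hb.pow 3).inv₀ ?_).add (continuousOn_const.mul hb)
      intro p hp
      exact (pow_pos (hbpos p hp) 3).ne'
    obtain ⟨C, hC⟩ := (isCompact_Icc.image_of_continuousOn hc).bddAbove
    exact ⟨C, fun p hp => hC ⟨p, hp, rfl⟩⟩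
  have hwcont : ContinuousOn w (Set.Icc p₀ 0) := fun p hp => (hw p hp).continuousWithinAt
  have hEcont : ContinuousOn (fun p => w p ^ 2 + (b p ^ 3 * w' p) ^ 2) (Set.Icc p₀ 0) :=
    (hwcont.pow 2).add (((hb.pow 3).mul hwc).pow 2)
  have hE : ∀ p ∈ Set.Ioo p₀ 0, ∃ D, HasDerivAt (fun p => w p ^ 2 + (b p ^ 3 * w' p) ^ 2) D p ∧
      |D| ≤ C * (w p ^ 2 + (b p ^ 3 * w' p) ^ 2) := by
    intro p hp
    have hpI := Set.Ioo_subset_Icc_self hp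
    have hwd : HasDerivAt w (w' p) p := (hw p hpI).hasDerivAt (Icc_mem_nhds hp.1 hp.2)
    refine ⟨_, (hwd.pow 2).add ((hode p hp).pow 2), ?_⟩
    have hbp := hbpos p hpI
    have hb3 : 0 < b p ^ 3 := pow_pos hbp 3
    set W := b p ^ 3 * w' p with hW
    have hw' : w' p = (b p ^ 3)⁻¹ * W := by rw [hW]; field_simp
    have hK : 0 ≤ (b p ^ 3)⁻¹ + μ * b p := by positivity
    have e : ((2:ℕ):ℝ) * w p ^ (2-1) * w' p + ((2:ℕ):ℝ) * W ^ (2-1) * (μ * b p * w p)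
        = ((b p ^ 3)⁻¹ + μ * b p) * (2 * w p * W) := by
      rw [hw']; push_cast; ring
    rw [e, abs_mul, abs_of_nonneg hK]
    have h2 : |2 * w p * W| ≤ w p ^ 2 + W ^ 2 := by
      rw [abs_le]; constructor <;> nlinarith [sq_nonneg (w p + W), sq_nonneg (w p - W)]
    exact mul_le_mul (hC p hpI) h2 (abs_nonneg _) (hK.trans (hC p hpI))
  have hexp : ∀ c p : ℝ, HasDerivAt (fun p => Real.exp (c * p)) (Real.exp (c * p) * c) p := by
    intro c p
    have := ((hasDerivAt_id p).const_mul c).exp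
    simpa using this
  have hA : AntitoneOn (fun p => (w p ^ 2 + (b p ^ 3 * w' p) ^ 2) * Real.exp (-C * p))
      (Set.Icc p₀ 0) := by
    refine antitoneOn_of_deriv_nonpos (convex_Icc _ _) (hEcont.mul (by fun_prop)) ?_ ?_
    · intro p hp
      rw [interior_Icc] at hp
      obtain ⟨D, hD, -⟩ := hE p hp
      exact (hD.mul (hexp (-C) p)).differentiableAt.differentiableWithinAt
    · intro p hp
      rw [interior_Icc] at hp
      obtain ⟨D, hD, hD'⟩ := hE p hp
      have := (hD.mul (hexp (-C) p)).deriv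
      refine (this.trans_le ?_)
      have := (abs_le.1 hD').2
      nlinarith [Real.exp_pos (-C * p)]
  have hB : MonotoneOn (fun p => (w p ^ 2 + (b p ^ 3 * w' p) ^ 2) * Real.exp (C * p))
      (Set.Icc p₀ 0) := by
    refine monotoneOn_of_deriv_nonneg (convex_Icc _ _) (hEcont.mul (by fun_prop)) ?_ ?_
    · intro p hp
      rw [interior_Icc] at hp
      obtain ⟨D, hD, -⟩ := hE p hp
      exact (hD.mul (hexp C p)).differentiableAt.differentiableWithinAt
    · intro p hp
      rw [interior_Icc] at hp
      obtain ⟨D, hD, hD'⟩ := hE p hp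
      have := (hD.mul (hexp C p)).deriv
      refine (le_of_le_of_eq ?_ this.symm)
      have := (abs_le.1 hD').1
      nlinarith [Real.exp_pos (C * p)]
  intro p hp
  have key : w p ^ 2 + (b p ^ 3 * w' p) ^ 2 ≤ 0 := by
    rcases le_total q p with h | h
    · have := hA hq hp h
      simp only [h0, h1] at this
      have h3 := Real.exp_pos (-C * p)
      by_contra! hn
      nlinarith [mul_pos hn h3]
    · have := hB hp hq h
      simp only [h0, h1] at this
      have h3 := Real.exp_pos (C * p)
      by_contra! hn
      nlinarith [mul_pos hn h3]
  have : w p ^ 2 = 0 := le_antisymm (by nlinarith [sq_nonneg (b p ^ 3 * w' p)]) (sq_nonneg _)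
  exact pow_eq_zero_iff (two_ne_zero) |>.1 this

lemma uniq_comb (p₀ μ : ℝ) (hμ : 0 ≤ μ)
    (b : ℝ → ℝ) (hb : ContinuousOn b (Set.Icc p₀ 0)) (hbpos : ∀ p ∈ Set.Icc p₀ 0, 0 < b p)
    (w w' u u' : ℝ → ℝ)
    (hw : ∀ p ∈ Set.Icc p₀ 0, HasDerivWithinAt w (w' p) (Set.Icc p₀ 0) p)
    (hwc : ContinuousOn w' (Set.Icc p₀ 0))
    (hode : ∀ p ∈ Set.Ioo p₀ 0,
      HasDerivAt (fun s => b s ^ 3 * w' s) (μ * b p * w p) p)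
    (hu : ∀ p ∈ Set.Icc p₀ 0, HasDerivWithinAt u (u' p) (Set.Icc p₀ 0) p)
    (huc : ContinuousOn u' (Set.Icc p₀ 0))
    (huode : ∀ p ∈ Set.Ioo p₀ 0,
      HasDerivAt (fun s => b s ^ 3 * u' s) (μ * b p * u p) p)
    (k q : ℝ) (hq : q ∈ Set.Icc p₀ 0) (h0 : w q = k * u q) (h1 : w' q = k * u' q) :
    ∀ p ∈ Set.Icc p₀ 0, w p = k * u p := by
  have := uniq_aux p₀ μ hμ b hb hbpos (fun p => w p - k * u p) (fun p => w' p - k * u' p)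
    (fun p hp => (hw p hp).sub ((hu p hp).const_mul k))
    (hwc.sub (continuousOn_const.mul huc))
    (fun p hp => by
      have h := (hode p hp).sub ((huode p hp).const_mul k)
      have e1 : (fun s => b s ^ 3 * (w' s - k * u' s)) =
          (fun s => b s ^ 3 * w' s) - fun y => k * (b y ^ 3 * u' y) := by
        funext s; simp only [Pi.sub_apply]; ring
      have e2 : μ * b p * (w p - k * u p) = μ * b p * w p - k * (μ * b p * u p) := by ring
      simp only [e1, e2]
      exact h) q hq (by simp [h0]) (by simp [h1])
  intro p hp
  exact sub_eq_zero.1 (this p hp)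

/-- With `z` the solution of `(b³z′)′ = μ b z` with `z(p₀)=0, z′(p₀)=1`, and `v`
the solution with `v(0)=λ^{3/2}, v′(0)=g+σμ`, there exists a nontrivial `C¹` solution `w` of
`(b³w′)′ = μ b w` with `w(p₀)=0` and `(g+σμ)w(0) = λ^{3/2} w′(0)` iff `z` and `v` are
linearly dependent. -/
theorem stmt_3 (p₀ g σ lam μ : ℝ) (hp₀ : p₀ < 0) (hg : 0 < g) (hσ : 0 < σ)
    (hlam : 0 < lam) (hμ : 0 ≤ μ)
    (b : ℝ → ℝ) (hb : ContinuousOn b (Set.Icc p₀ 0)) (hbpos : ∀ p ∈ Set.Icc p₀ 0, 0 < b p)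
    (z z' v v' : ℝ → ℝ)
    (hz : ∀ p ∈ Set.Icc p₀ 0, HasDerivWithinAt z (z' p) (Set.Icc p₀ 0) p)
    (hzc : ContinuousOn z' (Set.Icc p₀ 0))
    (hz0 : z p₀ = 0) (hz1 : z' p₀ = 1)
    (hzode : ∀ p ∈ Set.Ioo p₀ 0,
      HasDerivAt (fun s => b s ^ 3 * z' s) (μ * b p * z p) p)
    (hv : ∀ p ∈ Set.Icc p₀ 0, HasDerivWithinAt v (v' p) (Set.Icc p₀ 0) p)
    (hvc : ContinuousOn v' (Set.Icc p₀ 0))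
    (hv0 : v 0 = Real.sqrt lam ^ 3) (hv1 : v' 0 = g + σ * μ)
    (hvode : ∀ p ∈ Set.Ioo p₀ 0,
      HasDerivAt (fun s => b s ^ 3 * v' s) (μ * b p * v p) p) :
    (∃ w w' : ℝ → ℝ,
        (∀ p ∈ Set.Icc p₀ 0, HasDerivWithinAt w (w' p) (Set.Icc p₀ 0) p) ∧
        ContinuousOn w' (Set.Icc p₀ 0) ∧
        (∃ p ∈ Set.Icc p₀ (0 : ℝ), w p ≠ 0) ∧
        w p₀ = 0 ∧
        (g + σ * μ) * w 0 = Real.sqrt lam ^ 3 * w' 0 ∧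
        (∀ p ∈ Set.Ioo p₀ 0,
          HasDerivAt (fun s => b s ^ 3 * w' s) (μ * b p * w p) p)) ↔
      ∃ c₁ c₂ : ℝ, (c₁, c₂) ≠ (0, 0) ∧ ∀ p ∈ Set.Icc p₀ 0, c₁ * z p + c₂ * v p = 0 := by
  have hpI : p₀ ∈ Set.Icc p₀ 0 := ⟨le_rfl, hp₀.le⟩
  have h0I : (0:ℝ) ∈ Set.Icc p₀ 0 := ⟨hp₀.le, le_rfl⟩
  have hL : 0 < Real.sqrt lam ^ 3 := pow_pos (Real.sqrt_pos.2 hlam) 3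
  have hud := uniqueDiffOn_Icc hp₀
  constructor
  · rintro ⟨w, w', hw, hwc, ⟨r, hr, hwr⟩, hw0, hbc, hwode⟩
    have hA := uniq_comb p₀ μ hμ b hb hbpos w w' z z' hw hwc hwode hz hzc hzode
      (w' p₀) p₀ hpI (by simp [hw0, hz0]) (by simp [hz1])
    have hB := uniq_comb p₀ μ hμ b hb hbpos w w' v v' hw hwc hwode hv hvc hvode
      (w 0 / Real.sqrt lam ^ 3) 0 h0I (by rw [hv0]; field_simp)
      (by rw [hv1]; field_simp; linarith)
    refine ⟨w' p₀, -(w 0 / Real.sqrt lam ^ 3), ?_, ?_⟩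
    · intro h
      have h1 : w' p₀ = 0 := congrArg Prod.fst h
      apply hwr
      rw [hA r hr, h1, zero_mul]
    · intro p hp
      have := hA p hp
      have := hB p hp
      linarith
  · rintro ⟨c₁, c₂, hne, hc⟩
    have hc' : ∀ p ∈ Set.Icc p₀ 0, c₁ * z' p + c₂ * v' p = 0 := by
      intro p hp
      have h1 := ((hz p hp).const_mul c₁).add ((hv p hp).const_mul c₂)
      have h2 : HasDerivWithinAt (fun _ : ℝ => (0:ℝ)) (c₁ * z' p + c₂ * v' p) (Set.Icc p₀ 0) p :=
        h1.congr (fun x hx => (hc x hx).symm) (hc p hp).symm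
      exact (hud p hp).eq_deriv _ h2 (hasDerivWithinAt_const _ _ _)
    have hc2 : c₂ ≠ 0 := by
      intro h
      have := hc' p₀ hpI
      rw [hz1, h] at this
      apply hne
      rw [h]
      simpa using this
    refine ⟨z, z', hz, hzc, ?_, hz0, ?_, hzode⟩
    · by_contra! hn
      have h2 : HasDerivWithinAt (fun _ : ℝ => (0:ℝ)) (z' p₀) (Set.Icc p₀ 0) p₀ :=
        (hz p₀ hpI).congr (fun x hx => (hn x hx).symm) (hn p₀ hpI).symm
      have := (hud p₀ hpI).eq_deriv _ h2 (hasDerivWithinAt_const _ _ _)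
      linarith
    · have h1 := hc 0 h0I
      have h2 := hc' 0 h0I
      rw [← hv1, ← hv0]
      apply mul_left_cancel₀ hc2
      linear_combination z 0 * h2 - z' 0 * h1
end

section
/- Suppose μ ≥ 0 and z : [p₀,0] → ℝ is C¹ with z(p₀) = 0, z′(p₀) = 1, and p ↦ b(p)³z′(p) is differentiable on (p₀,0) with derivative μ·b·z. Then z(p) > 0 and z′(p) > 0 for every p ∈ (p₀,0]. -/
open Set

/-- For `μ ≥ 0`, the solution `z` of `(b³z′)′ = μ b z` with `z(p₀)=0, z′(p₀)=1`
satisfies `z > 0` and `z′ > 0` on `(p₀,0]`. -/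
theorem stmt_6 (p₀ μ : ℝ) (hp₀ : p₀ < 0) (hμ : 0 ≤ μ)
    (b : ℝ → ℝ) (hb : ContinuousOn b (Set.Icc p₀ 0)) (hbpos : ∀ p ∈ Set.Icc p₀ 0, 0 < b p)
    (z z' : ℝ → ℝ)
    (hz : ∀ p ∈ Set.Icc p₀ 0, HasDerivWithinAt z (z' p) (Set.Icc p₀ 0) p)
    (hzc : ContinuousOn z' (Set.Icc p₀ 0))
    (hz0 : z p₀ = 0) (hz1 : z' p₀ = 1)
    (hzode : ∀ p ∈ Set.Ioo p₀ 0,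
      HasDerivAt (fun s => b s ^ 3 * z' s) (μ * b p * z p) p) :
    ∀ p ∈ Set.Ioc p₀ (0 : ℝ), 0 < z p ∧ 0 < z' p := by
  have mono : ∀ q ∈ Set.Icc p₀ 0, (∀ p ∈ Set.Ioo p₀ q, 0 < z' p) →
      StrictMonoOn z (Set.Icc p₀ q) := by
    intro q hq h
    apply strictMonoOn_of_deriv_pos (convex_Icc _ _)
    · intro p hp
      exact ((hz p ⟨hp.1, hp.2.trans hq.2⟩).continuousWithinAt).mono
        (Set.Icc_subset_Icc_right hq.2)
    · intro p hp
      rw [interior_Icc] at hp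
      have hp0 : p < 0 := hp.2.trans_le hq.2
      rw [((hz p ⟨hp.1.le, hp0.le⟩).hasDerivAt (Icc_mem_nhds hp.1 hp0)).deriv]
      exact h p hp
  have hpos : ∀ p ∈ Set.Icc p₀ 0, 0 < z' p := by
    by_contra hcon
    push Not at hcon
    obtain ⟨r, hr, hr'⟩ := hcon
    have hcl : IsClosed (Set.Icc p₀ 0 ∩ z' ⁻¹' Set.Iic 0) :=
      hzc.preimage_isClosed_of_isClosed isClosed_Icc isClosed_Iic
    have hcomp : IsCompact (Set.Icc p₀ 0 ∩ z' ⁻¹' Set.Iic 0) :=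
      isCompact_Icc.of_isClosed_subset hcl Set.inter_subset_left
    obtain ⟨q, ⟨hq, hq'⟩, hmin⟩ := hcomp.exists_isLeast ⟨r, hr, hr'⟩
    have hq'' : z' q ≤ 0 := hq'
    have hlt : ∀ p ∈ Set.Ioo p₀ q, 0 < z' p := by
      intro p hp
      by_contra hn
      have := hmin ⟨⟨hp.1.le, hp.2.le.trans hq.2⟩, not_lt.mp hn⟩
      exact absurd hp.2 (not_lt.mpr this)
    have hm := mono q hq hlt
    have hM : MonotoneOn (fun s => b s ^ 3 * z' s) (Set.Icc p₀ q) := by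
      apply monotoneOn_of_deriv_nonneg (convex_Icc _ _)
      · exact ((hb.pow 3).mul hzc).mono (Set.Icc_subset_Icc_right hq.2)
      · intro p hp
        rw [interior_Icc] at hp
        exact (hzode p ⟨hp.1, hp.2.trans_le hq.2⟩).differentiableAt.differentiableWithinAt
      · intro p hp
        rw [interior_Icc] at hp
        rw [(hzode p ⟨hp.1, hp.2.trans_le hq.2⟩).deriv]
        have h1 := hm ⟨le_refl _, hq.1⟩ ⟨hp.1.le, hp.2.le⟩ hp.1
        rw [hz0] at h1
        have h2 := hbpos p ⟨hp.1.le, hp.2.le.trans hq.2⟩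
        positivity
    have h3 := hM ⟨le_refl _, hq.1⟩ ⟨hq.1, le_refl _⟩ hq.1
    simp only [hz1, mul_one] at h3
    have h4 := pow_pos (hbpos p₀ ⟨le_refl _, hp₀.le⟩) 3
    have h5 := pow_pos (hbpos q hq) 3
    nlinarith [mul_nonneg h5.le (neg_nonneg.mpr hq'')]
  intro p hp
  refine ⟨?_, hpos p ⟨hp.1.le, hp.2⟩⟩
  have h := mono 0 ⟨hp₀.le, le_refl _⟩ (fun p hp => hpos p ⟨hp.1.le, hp.2.le⟩)
    ⟨le_refl _, hp₀.le⟩ ⟨hp.1.le, hp.2⟩ hp.1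
  rwa [hz0] at h
end

section
/- For every λ > λ₀, letting b(p) := √(λ − 2Γ(p)) and z(p) := ∫_{p₀}^p b(p₀)³/b(s)³ ds for p ∈ [p₀,0], one has λ^{3/2}·z′(0) − g·z(0) > 0. -/
open Set

/-- For every `λ > λ₀`, with `b(p) := √(λ − 2Γ(p))` and
`z(p) := ∫_{p₀}^p b(p₀)³/b(s)³ ds`, one has `λ^{3/2}·z′(0) − g·z(0) > 0`
(here `z′(0) = b(p₀)³/b(0)³`). -/
theorem stmt_7 (p₀ g lam₀ lam : ℝ) (hp₀ : p₀ < 0) (hg : 0 < g)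
    (Γ : ℝ → ℝ) (K : NNReal) (hΓ : LipschitzOnWith K Γ (Set.Icc p₀ 0)) (hΓ0 : Γ 0 = 0)
    (hlam₀ : 2 * sSup (Γ '' Set.Icc p₀ 0) < lam₀)
    (hlam₀' : g * ∫ p in p₀..0, (Real.sqrt (lam₀ - 2 * Γ p) ^ 3)⁻¹ = 1)
    (hlam : lam₀ < lam) :
    Real.sqrt lam ^ 3
        * (Real.sqrt (lam - 2 * Γ p₀) ^ 3 / Real.sqrt (lam - 2 * Γ 0) ^ 3)
      - g * ∫ s in p₀..0, Real.sqrt (lam - 2 * Γ p₀) ^ 3 / Real.sqrt (lam - 2 * Γ s) ^ 3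
      > 0 := by
  have hc : ContinuousOn Γ (Set.Icc p₀ 0) := hΓ.continuousOn
  have hbdd : BddAbove (Γ '' Set.Icc p₀ 0) := (isCompact_Icc.image_of_continuousOn hc).bddAbove
  have hle : ∀ p ∈ Set.Icc p₀ 0, 2 * Γ p < lam₀ := fun p hp => by
    have := le_csSup hbdd (Set.mem_image_of_mem Γ hp)
    linarith
  have h0 : 0 < lam₀ := by
    have := hle 0 ⟨hp₀.le, le_rfl⟩
    rw [hΓ0] at this
    linarith
  have hpos : ∀ l, lam₀ ≤ l → ∀ p ∈ Set.Icc p₀ 0, 0 < Real.sqrt (l - 2 * Γ p) ^ 3 :=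
    fun l hl p hp => by
      have := hle p hp
      exact pow_pos (Real.sqrt_pos.2 (by linarith)) 3
  have hcont : ∀ l, lam₀ ≤ l →
      ContinuousOn (fun p => (Real.sqrt (l - 2 * Γ p) ^ 3)⁻¹) (Set.Icc p₀ 0) := fun l hl => by
    refine ContinuousOn.inv₀ ?_ (fun p hp => (hpos l hl p hp).ne')
    exact ((continuousOn_const.sub (continuousOn_const.mul hc)).sqrt).pow 3
  have hlt : ∀ p ∈ Set.Icc p₀ 0, (Real.sqrt (lam - 2 * Γ p) ^ 3)⁻¹
      < (Real.sqrt (lam₀ - 2 * Γ p) ^ 3)⁻¹ := fun p hp => by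
    have := hle p hp
    refine inv_strictAnti₀ (hpos lam₀ le_rfl p hp) ?_
    exact pow_lt_pow_left₀ (Real.sqrt_lt_sqrt (by linarith) (by linarith)) (Real.sqrt_nonneg _)
      (by norm_num)
  have hint : ∫ p in p₀..0, (Real.sqrt (lam - 2 * Γ p) ^ 3)⁻¹
      < ∫ p in p₀..0, (Real.sqrt (lam₀ - 2 * Γ p) ^ 3)⁻¹ :=
    intervalIntegral.integral_lt_integral_of_continuousOn_of_le_of_exists_lt hp₀
      (hcont lam hlam.le) (hcont lam₀ le_rfl)
      (fun p hp => (hlt p ⟨hp.1.le, hp.2⟩).le) ⟨0, ⟨hp₀.le, le_rfl⟩, hlt 0 ⟨hp₀.le, le_rfl⟩⟩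
  have hB := hpos lam hlam.le p₀ ⟨le_rfl, hp₀.le⟩
  have hl : Real.sqrt lam ^ 3 ≠ 0 := (pow_pos (Real.sqrt_pos.2 (h0.trans hlam)) 3).ne'
  simp only [div_eq_mul_inv, intervalIntegral.integral_const_mul]
  rw [hΓ0, mul_zero, sub_zero, mul_comm (Real.sqrt (lam - 2 * Γ p₀) ^ 3) (Real.sqrt lam ^ 3)⁻¹,
    mul_inv_cancel_left₀ hl]
  have h1 := mul_lt_mul_of_pos_left hint hg
  rw [hlam₀'] at h1
  have h2 := mul_lt_mul_of_pos_left h1 hB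
  linarith
end

section
/- Fix λ ≥ λ₀ and set b(p) := √(λ − 2Γ(p)). Suppose that for each μ ≥ 0 the function z_μ : [p₀,0] → ℝ is C¹ with z_μ(p₀) = 0, z_μ′(p₀) = 1, and p ↦ b(p)³z_μ′(p) is differentiable on (p₀,0) with derivative μ·b·z_μ. Then λ^{3/2}·z_μ′(0) − (g + σμ)·z_μ(0) → −∞ as μ → ∞. -/
open Set Filter

/-- Monotonicity from a nonnegative derivative in the interior. -/
lemma aux_mono {a b : ℝ} {f f' : ℝ → ℝ} (hc : ContinuousOn f (Icc a b))
    (hd : ∀ x ∈ Ioo a b, HasDerivAt f (f' x) x) (hn : ∀ x ∈ Ioo a b, 0 ≤ f' x) :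
    MonotoneOn f (Icc a b) := by
  apply monotoneOn_of_deriv_nonneg (convex_Icc a b) hc
  · rw [interior_Icc]
    exact fun x hx => (hd x hx).differentiableAt.differentiableWithinAt
  · rw [interior_Icc]
    intro x hx
    rw [(hd x hx).deriv]
    exact hn x hx

/-- The a priori estimates for a single value of `μ`. -/
lemma aux_est {p₀ m M μ : ℝ} (hp₀ : p₀ < 0) (hm : 0 < m) (hμ : 0 ≤ μ) (b z z' : ℝ → ℝ)
    (hbc : ContinuousOn b (Icc p₀ 0)) (hbm : ∀ p ∈ Icc p₀ 0, m ≤ b p)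
    (hbM : ∀ p ∈ Icc p₀ 0, b p ≤ M)
    (hz : ∀ p ∈ Icc p₀ 0, HasDerivWithinAt z (z' p) (Icc p₀ 0) p)
    (hzc : ContinuousOn z' (Icc p₀ 0)) (hz0 : z p₀ = 0) (hz1 : z' p₀ = 1)
    (hode : ∀ p ∈ Ioo p₀ 0, HasDerivAt (fun s => b s ^ 3 * z' s) (μ * b p * z p) p) :
    m ^ 3 / M ^ 3 * (-p₀) ≤ z 0 ∧ b 0 ^ 3 * z' 0 ≤ M ^ 3 + Real.sqrt μ * M ^ 2 * z 0 := by
  have hl : p₀ ∈ Icc p₀ 0 := ⟨le_rfl, hp₀.le⟩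
  have hr : (0:ℝ) ∈ Icc p₀ 0 := ⟨hp₀.le, le_rfl⟩
  have hM : 0 < M := hm.trans_le ((hbm _ hl).trans (hbM _ hl))
  have hzcont : ContinuousOn z (Icc p₀ 0) := fun p hp => (hz p hp).continuousWithinAt
  have hzd : ∀ p ∈ Ioo p₀ 0, HasDerivAt z (z' p) p := fun p hp =>
    (hz p (Ioo_subset_Icc_self hp)).hasDerivAt (Icc_mem_nhds hp.1 hp.2)
  have hb0 : ∀ p ∈ Icc p₀ 0, 0 < b p := fun p hp => hm.trans_le (hbm p hp)
  obtain ⟨w, hw⟩ : ∃ w : ℝ → ℝ, w = fun s => b s ^ 3 * z' s := ⟨_, rfl⟩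
  have hwv : ∀ s, w s = b s ^ 3 * z' s := fun s => by rw [hw]
  have hwc : ContinuousOn w (Icc p₀ 0) := by rw [hw]; exact (hbc.pow 3).mul hzc
  rw [← hw] at hode
  have hw0 : w p₀ = b p₀ ^ 3 := by rw [hwv, hz1, mul_one]
  -- the product of z and w is nondecreasing
  have h1 : MonotoneOn (fun s => z s * w s) (Icc p₀ 0) := by
    refine aux_mono (hzcont.mul hwc) (fun x hx => (hzd x hx).mul (hode x hx)) ?_
    intro x hx
    have := hb0 x (Ioo_subset_Icc_self hx)
    have e : z' x * w x + z x * (μ * b x * z x) = b x ^ 3 * z' x ^ 2 + μ * b x * z x ^ 2 := by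
      rw [hwv]; ring
    rw [e]; positivity
  have h2 : ∀ p ∈ Icc p₀ 0, 0 ≤ z p * w p := by
    intro p hp
    have := h1 hl hp hp.1
    simpa [hz0] using this
  have h2' : ∀ p ∈ Icc p₀ 0, 0 ≤ z p * z' p := by
    intro p hp
    have h := h2 p hp
    have h3 : 0 < b p ^ 3 := pow_pos (hb0 p hp) 3
    have e : z p * w p = b p ^ 3 * (z p * z' p) := by rw [hwv]; ring
    rw [e] at h
    exact nonneg_of_mul_nonneg_right h h3
  have h3 : MonotoneOn (fun s => w s * w s) (Icc p₀ 0) := by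
    refine aux_mono (hwc.mul hwc) (fun x hx => (hode x hx).mul (hode x hx)) ?_
    intro x hx
    have hx' := Ioo_subset_Icc_self hx
    have h5 := hb0 x hx'
    have h6 := h2 x hx'
    have e : μ * b x * z x * w x + w x * (μ * b x * z x) = 2 * μ * b x * (z x * w x) := by ring
    rw [e]; positivity
  have hm3 : m ^ 3 ≤ w p₀ := by
    rw [hw0]; exact pow_le_pow_left₀ hm.le (hbm _ hl) 3
  have hm3p : 0 < m ^ 3 := pow_pos hm 3
  have h4 : ∀ p ∈ Icc p₀ 0, w p₀ * w p₀ ≤ w p * w p := fun p hp => h3 hl hp hp.1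
  have h5 : ∀ p ∈ Icc p₀ 0, 0 < w p := by
    intro p hp
    by_contra hneg
    push Not at hneg
    have hsub : Icc p₀ p ⊆ Icc p₀ 0 := Icc_subset_Icc_right hp.2
    obtain ⟨q, hq, hq0⟩ := intermediate_value_Icc' hp.1 (hwc.mono hsub)
      (show (0:ℝ) ∈ Icc (w p) (w p₀) from ⟨hneg, by linarith⟩)
    have := h4 q (hsub hq)
    rw [hq0] at this
    nlinarith
  have h6 : ∀ p ∈ Icc p₀ 0, m ^ 3 ≤ w p := by
    intro p hp
    have := h4 p hp
    have := h5 p hp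
    nlinarith
  have h7 : ∀ p ∈ Icc p₀ 0, m ^ 3 / M ^ 3 ≤ z' p := by
    intro p hp
    have hbp := hb0 p hp
    have hz'p : 0 < z' p := by
      have := h5 p hp
      rw [hwv] at this
      exact pos_of_mul_pos_right this (by positivity)
    rw [div_le_iff₀ (by positivity)]
    calc m ^ 3 ≤ b p ^ 3 * z' p := by rw [← hwv]; exact h6 p hp
      _ ≤ M ^ 3 * z' p := by gcongr; exact hbM p hp
      _ = _ := by ring
  have h8 : m ^ 3 / M ^ 3 * (-p₀) ≤ z 0 := by
    have : MonotoneOn (fun s => z s - m ^ 3 / M ^ 3 * s) (Icc p₀ 0) := by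
      refine aux_mono (f' := fun s => z' s - m ^ 3 / M ^ 3 * 1) (hzcont.sub (by fun_prop))
        (fun x hx => (hzd x hx).sub ((hasDerivAt_id x).const_mul _)) ?_
      intro x hx
      have := h7 x (Ioo_subset_Icc_self hx)
      simpa using this
    have := this hl hr hp₀.le
    simp only [hz0] at this
    linarith
  refine ⟨h8, ?_⟩
  have hz0pos : 0 ≤ z 0 := by
    refine le_trans ?_ h8
    have : 0 < -p₀ := by linarith
    positivity
  have h9 : MonotoneOn (fun s => μ * M ^ 4 * (z s * z s) - w s * w s) (Icc p₀ 0) := by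
    refine aux_mono ((continuousOn_const.mul (hzcont.mul hzcont)).sub (hwc.mul hwc))
      (fun x hx => (((hzd x hx).mul (hzd x hx)).const_mul _).sub
        ((hode x hx).mul (hode x hx))) ?_
    intro x hx
    have hx' := Ioo_subset_Icc_self hx
    have h10 : 0 ≤ M ^ 4 - b x ^ 4 :=
      sub_nonneg.2 (pow_le_pow_left₀ (hb0 x hx').le (hbM x hx') 4)
    have h11 := h2' x hx'
    have e : μ * M ^ 4 * (z' x * z x + z x * z' x)
        - (μ * b x * z x * w x + w x * (μ * b x * z x))
        = 2 * μ * (z x * z' x) * (M ^ 4 - b x ^ 4) := by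
      rw [hwv]; ring
    rw [e]; positivity
  have h12 := h9 hl hr hp₀.le
  simp only [hz0] at h12
  have h13 : w p₀ ≤ M ^ 3 := by
    rw [hw0]; exact pow_le_pow_left₀ (hb0 _ hl).le (hbM _ hl) 3
  have hs : Real.sqrt μ ^ 2 = μ := Real.sq_sqrt hμ
  rw [← hwv]
  have hs0 := Real.sqrt_nonneg μ
  refine (pow_le_pow_iff_left₀ (h5 0 hr).le (by positivity) two_ne_zero).1 ?_
  have e : μ * M ^ 4 * (z 0 * z 0) = (Real.sqrt μ * M ^ 2 * z 0) ^ 2 := by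
    rw [mul_pow, mul_pow, hs]; ring
  have h14 : w p₀ * w p₀ ≤ M ^ 3 * M ^ 3 := by
    have := h5 p₀ hl
    gcongr
  have h15 : 0 ≤ M ^ 3 * (Real.sqrt μ * M ^ 2 * z 0) := by positivity
  nlinarith

/-- Fix `λ ≥ λ₀` and `b(p) := √(λ − 2Γ(p))`. If for each `μ ≥ 0` the function
`z_μ` solves `(b³z_μ′)′ = μ b z_μ` on `(p₀,0)` with `z_μ(p₀)=0, z_μ′(p₀)=1`, then
`λ^{3/2} z_μ′(0) − (g+σμ) z_μ(0) → −∞` as `μ → ∞`. -/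
theorem stmt_8 (p₀ g σ lam₀ lam : ℝ) (hp₀ : p₀ < 0) (hg : 0 < g) (hσ : 0 < σ)
    (Γ : ℝ → ℝ) (K : NNReal) (hΓ : LipschitzOnWith K Γ (Set.Icc p₀ 0)) (hΓ0 : Γ 0 = 0)
    (hlam₀ : 2 * sSup (Γ '' Set.Icc p₀ 0) < lam₀)
    (hlam₀' : g * ∫ p in p₀..0, (Real.sqrt (lam₀ - 2 * Γ p) ^ 3)⁻¹ = 1)
    (hlam : lam₀ ≤ lam)
    (z z' : ℝ → ℝ → ℝ)
    (hz : ∀ μ : ℝ, 0 ≤ μ → ∀ p ∈ Set.Icc p₀ 0,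
      HasDerivWithinAt (z μ) (z' μ p) (Set.Icc p₀ 0) p)
    (hzc : ∀ μ : ℝ, 0 ≤ μ → ContinuousOn (z' μ) (Set.Icc p₀ 0))
    (hz0 : ∀ μ : ℝ, 0 ≤ μ → z μ p₀ = 0)
    (hz1 : ∀ μ : ℝ, 0 ≤ μ → z' μ p₀ = 1)
    (hzode : ∀ μ : ℝ, 0 ≤ μ → ∀ p ∈ Set.Ioo p₀ 0,
      HasDerivAt (fun s => Real.sqrt (lam - 2 * Γ s) ^ 3 * z' μ s)
        (μ * Real.sqrt (lam - 2 * Γ p) * z μ p) p) :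
    Tendsto (fun μ : ℝ => Real.sqrt lam ^ 3 * z' μ 0 - (g + σ * μ) * z μ 0)
      atTop atBot := by
  obtain ⟨b, hb⟩ : ∃ b : ℝ → ℝ, b = fun p => Real.sqrt (lam - 2 * Γ p) := ⟨_, rfl⟩
  have hbv : ∀ p, Real.sqrt (lam - 2 * Γ p) = b p := fun p => by rw [hb]
  have hbc : ContinuousOn b (Icc p₀ 0) := by
    rw [hb]
    exact (continuousOn_const.sub (continuousOn_const.mul hΓ.continuousOn)).sqrt
  have hne : (Icc p₀ (0:ℝ)).Nonempty := nonempty_Icc.2 hp₀.le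
  have hbpos : ∀ p ∈ Icc p₀ 0, 0 < b p := by
    intro p hp
    have : Γ p ≤ sSup (Γ '' Icc p₀ 0) :=
      le_csSup (isCompact_Icc.image_of_continuousOn hΓ.continuousOn).bddAbove
        (mem_image_of_mem _ hp)
    rw [← hbv]
    apply Real.sqrt_pos.2
    linarith
  obtain ⟨q, hq, hqm⟩ := isCompact_Icc.exists_isMinOn hne hbc
  obtain ⟨r, hr, hrM⟩ := isCompact_Icc.exists_isMaxOn hne hbc
  obtain ⟨m, hmq⟩ : ∃ m, m = b q := ⟨_, rfl⟩
  obtain ⟨M, hMr⟩ : ∃ M, M = b r := ⟨_, rfl⟩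
  have hm : 0 < m := hmq ▸ hbpos q hq
  have hM : 0 < M := hMr ▸ hbpos r hr
  simp only [hbv] at hzode
  have hb0 : Real.sqrt lam = b 0 := by rw [← hbv, hΓ0]; simp
  have hest : ∀ μ : ℝ, 0 ≤ μ → _ := fun μ hμ =>
    aux_est hp₀ hm hμ b (z μ) (z' μ) hbc (fun p hp => hmq ▸ hqm hp) (fun p hp => hMr ▸ hrM hp)
      (hz μ hμ) (hzc μ hμ) (hz0 μ hμ) (hz1 μ hμ) (hzode μ hμ)
  obtain ⟨c, hc⟩ : ∃ c, c = m ^ 3 / M ^ 3 * (-p₀) := ⟨_, rfl⟩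
  have hcpos : 0 < c := by
    have : 0 < -p₀ := by linarith
    rw [hc]; positivity
  rw [← hc] at hest
  have hlim : Tendsto (fun μ : ℝ => M ^ 3 + -(c * Real.sqrt μ)) atTop atBot := by
    apply tendsto_atBot_add_const_left
    exact tendsto_neg_atTop_atBot.comp (Real.tendsto_sqrt_atTop.const_mul_atTop hcpos)
  refine tendsto_atBot_mono' atTop ?_ hlim
  filter_upwards [eventually_ge_atTop 0,
    Real.tendsto_sqrt_atTop.eventually_ge_atTop ((M ^ 2 + 1) / σ)] with μ hμ hμ2
  obtain ⟨h1, h2⟩ := hest μ hμ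
  rw [hb0]
  rw [div_le_iff₀ hσ] at hμ2
  have hs : Real.sqrt μ * Real.sqrt μ = μ := Real.mul_self_sqrt hμ
  have hs0 := Real.sqrt_nonneg μ
  have hzp : 0 < z μ 0 := hcpos.trans_le h1
  have h3 : Real.sqrt μ * (M ^ 2 + 1) ≤ σ * μ := by
    calc Real.sqrt μ * (M ^ 2 + 1) ≤ Real.sqrt μ * (Real.sqrt μ * σ) := by gcongr
      _ = σ * μ := by rw [← mul_assoc, hs, mul_comm]
  have h4 : Real.sqrt μ * (M ^ 2 + 1) * z μ 0 ≤ σ * μ * z μ 0 := by gcongr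
  have h5 : Real.sqrt μ * c ≤ Real.sqrt μ * z μ 0 := by gcongr
  have h6 : 0 < g * z μ 0 := by positivity
  nlinarith
end

section
/- Suppose b(0) = √λ̄. Suppose z : [p₀,0] → ℝ is C¹ with z(p₀) = 0, z′(p₀) = 1, p ↦ b(p)³z′(p) is differentiable on (p₀,0) with derivative μ̄·b·z, and λ̄^{3/2}·z′(0) = (g + σμ̄)·z(0). Suppose w : [p₀,0] → ℝ is C¹ with w(p₀) = w′(p₀) = 0 and p ↦ b(p)³w′(p) is differentiable on (p₀,0) with derivative μ̄·b·w + b·z. Then z(0)·(λ̄^{3/2}·w′(0) − (g + σμ̄)·w(0)) = ∫_{p₀}^0 b(p)·z(p)² dp. -/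
open Set

/-- Suppose `b(0) = √λ̄`, `z` solves `(b³z′)′ = μ̄ b z` with `z(p₀)=0, z′(p₀)=1`
and `λ̄^{3/2} z′(0) = (g+σμ̄) z(0)`, and `w` solves `(b³w′)′ = μ̄ b w + b z` with
`w(p₀) = w′(p₀) = 0`. Then
`z(0)·(λ̄^{3/2} w′(0) − (g+σμ̄) w(0)) = ∫_{p₀}^0 b(p) z(p)² dp`. -/
theorem stmt_9 (p₀ g σ lam μ : ℝ) (hp₀ : p₀ < 0) (hg : 0 < g) (hσ : 0 < σ)
    (hlam : 0 < lam) (hμ : 0 ≤ μ)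
    (b : ℝ → ℝ) (hb : ContinuousOn b (Set.Icc p₀ 0)) (hbpos : ∀ p ∈ Set.Icc p₀ 0, 0 < b p)
    (hb0 : b 0 = Real.sqrt lam)
    (z z' w w' : ℝ → ℝ)
    (hz : ∀ p ∈ Set.Icc p₀ 0, HasDerivWithinAt z (z' p) (Set.Icc p₀ 0) p)
    (hzc : ContinuousOn z' (Set.Icc p₀ 0))
    (hz0 : z p₀ = 0) (hz1 : z' p₀ = 1)
    (hzode : ∀ p ∈ Set.Ioo p₀ 0,
      HasDerivAt (fun s => b s ^ 3 * z' s) (μ * b p * z p) p)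
    (hzbc : Real.sqrt lam ^ 3 * z' 0 = (g + σ * μ) * z 0)
    (hw : ∀ p ∈ Set.Icc p₀ 0, HasDerivWithinAt w (w' p) (Set.Icc p₀ 0) p)
    (hwc : ContinuousOn w' (Set.Icc p₀ 0))
    (hw0 : w p₀ = 0) (hw1 : w' p₀ = 0)
    (hwode : ∀ p ∈ Set.Ioo p₀ 0,
      HasDerivAt (fun s => b s ^ 3 * w' s) (μ * b p * w p + b p * z p) p) :
    z 0 * (Real.sqrt lam ^ 3 * w' 0 - (g + σ * μ) * w 0)
      = ∫ p in p₀..0, b p * z p ^ 2 := by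
  have hzcont : ContinuousOn z (Set.Icc p₀ 0) := fun p hp => (hz p hp).continuousWithinAt
  have hwcont : ContinuousOn w (Set.Icc p₀ 0) := fun p hp => (hw p hp).continuousWithinAt
  have key : ∫ p in p₀..0, b p * z p ^ 2
      = (fun s => z s * (b s ^ 3 * w' s) - w s * (b s ^ 3 * z' s)) 0
        - (fun s => z s * (b s ^ 3 * w' s) - w s * (b s ^ 3 * z' s)) p₀ := by
    refine intervalIntegral.integral_eq_sub_of_hasDerivAt_of_le
      (f := fun s => z s * (b s ^ 3 * w' s) - w s * (b s ^ 3 * z' s)) hp₀.le ?_ ?_ ?_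
    · exact (hzcont.mul ((hb.pow 3).mul hwc)).sub (hwcont.mul ((hb.pow 3).mul hzc))
    · intro p hp
      have hn : Set.Icc p₀ 0 ∈ nhds p := Icc_mem_nhds hp.1 hp.2
      have hzp := (hz p (Set.Ioo_subset_Icc_self hp)).hasDerivAt hn
      have hwp := (hw p (Set.Ioo_subset_Icc_self hp)).hasDerivAt hn
      refine ((hzp.mul (hwode p hp)).sub (hwp.mul (hzode p hp))).congr_deriv ?_
      ring
    · apply ContinuousOn.intervalIntegrable
      rw [Set.uIcc_of_le hp₀.le]
      exact hb.mul (hzcont.pow 2)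
  rw [key]
  simp only [hz0, hw0, hb0]
  linear_combination w 0 * hzbc
end

section
/- Set b(p) := √(λ̄ − 2Γ(p)) (so b(0) = √λ̄) and assume μ̄ > 0 and λ̄ ≥ λ₀. Suppose z : [p₀,0] → ℝ is C¹ with z(p₀) = 0, z′(p₀) = 1, p ↦ b(p)³z′(p) is differentiable on (p₀,0) with derivative μ̄·b·z, and λ̄^{3/2}·z′(0) = (g + σμ̄)·z(0). Suppose w : [p₀,0] → ℝ is C¹ with w(p₀) = w′(p₀) = 0 and p ↦ b(p)³w′(p) is differentiable on (p₀,0) with derivative μ̄·b·w + b·z. Then λ̄^{3/2}·w′(0) − σ·z(0) − (g + σμ̄)·w(0) < 0. -/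
open Set

/-- With `b(p) := √(λ̄ − 2Γ(p))`, `μ̄ > 0`, `λ̄ ≥ λ₀`, if `z` solves
`(b³z′)′ = μ̄ b z` with `z(p₀)=0, z′(p₀)=1` and `λ̄^{3/2} z′(0) = (g+σμ̄) z(0)`, and `w`
solves `(b³w′)′ = μ̄ b w + b z` with `w(p₀) = w′(p₀) = 0`, then
`λ̄^{3/2} w′(0) − σ z(0) − (g+σμ̄) w(0) < 0`. -/
theorem stmt_10 (p₀ g σ lam₀ lam μ : ℝ) (hp₀ : p₀ < 0) (hg : 0 < g) (hσ : 0 < σ)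
    (hμ : 0 < μ)
    (Γ : ℝ → ℝ) (K : NNReal) (hΓ : LipschitzOnWith K Γ (Set.Icc p₀ 0)) (hΓ0 : Γ 0 = 0)
    (hlam₀ : 2 * sSup (Γ '' Set.Icc p₀ 0) < lam₀)
    (hlam₀' : g * ∫ p in p₀..0, (Real.sqrt (lam₀ - 2 * Γ p) ^ 3)⁻¹ = 1)
    (hlam : lam₀ ≤ lam)
    (z z' w w' : ℝ → ℝ)
    (hz : ∀ p ∈ Set.Icc p₀ 0, HasDerivWithinAt z (z' p) (Set.Icc p₀ 0) p)
    (hzc : ContinuousOn z' (Set.Icc p₀ 0))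
    (hz0 : z p₀ = 0) (hz1 : z' p₀ = 1)
    (hzode : ∀ p ∈ Set.Ioo p₀ 0,
      HasDerivAt (fun s => Real.sqrt (lam - 2 * Γ s) ^ 3 * z' s)
        (μ * Real.sqrt (lam - 2 * Γ p) * z p) p)
    (hzbc : Real.sqrt lam ^ 3 * z' 0 = (g + σ * μ) * z 0)
    (hw : ∀ p ∈ Set.Icc p₀ 0, HasDerivWithinAt w (w' p) (Set.Icc p₀ 0) p)
    (hwc : ContinuousOn w' (Set.Icc p₀ 0))
    (hw0 : w p₀ = 0) (hw1 : w' p₀ = 0)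
    (hwode : ∀ p ∈ Set.Ioo p₀ 0,
      HasDerivAt (fun s => Real.sqrt (lam - 2 * Γ s) ^ 3 * w' s)
        (μ * Real.sqrt (lam - 2 * Γ p) * w p + Real.sqrt (lam - 2 * Γ p) * z p) p) :
    Real.sqrt lam ^ 3 * w' 0 - σ * z 0 - (g + σ * μ) * w 0 < 0 := by
  have hc0 : p₀ ≤ 0 := hp₀.le
  have hΓc : ContinuousOn Γ (Icc p₀ 0) := hΓ.continuousOn
  have hbdd : BddAbove (Γ '' Icc p₀ 0) := (isCompact_Icc.image_of_continuousOn hΓc).bddAbove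
  have hpos0 : ∀ p ∈ Icc p₀ 0, 0 < lam₀ - 2 * Γ p := by
    intro p hp
    have := le_csSup hbdd (mem_image_of_mem Γ hp)
    linarith
  set b : ℝ → ℝ := fun s => Real.sqrt (lam - 2 * Γ s) with hb
  have hbpos : ∀ p ∈ Icc p₀ 0, 0 < b p := fun p hp =>
    Real.sqrt_pos.2 (by linarith [hpos0 p hp])
  have hbc : ContinuousOn b (Icc p₀ 0) :=
    (continuousOn_const.sub (continuousOn_const.mul hΓc)).sqrt
  have hb0c : ContinuousOn (fun s => Real.sqrt (lam₀ - 2 * Γ s)) (Icc p₀ 0) :=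
    (continuousOn_const.sub (continuousOn_const.mul hΓc)).sqrt
  have hbe : ∀ p, Real.sqrt (lam - 2 * Γ p) = b p := fun p => rfl
  simp only [hbe] at hzode hwode
  have hb0 : b 0 = Real.sqrt lam := by simp [hb, hΓ0]
  rw [← hb0] at hzbc ⊢
  have hzC : ContinuousOn z (Icc p₀ 0) := fun p hp => (hz p hp).continuousWithinAt
  have hwC : ContinuousOn w (Icc p₀ 0) := fun p hp => (hw p hp).continuousWithinAt
  have hz' : ∀ p ∈ Ioo p₀ 0, HasDerivAt z (z' p) p := fun p hp =>
    (hz p (Ioo_subset_Icc_self hp)).hasDerivAt (Icc_mem_nhds hp.1 hp.2)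
  have hw' : ∀ p ∈ Ioo p₀ 0, HasDerivAt w (w' p) p := fun p hp =>
    (hw p (Ioo_subset_Icc_self hp)).hasDerivAt (Icc_mem_nhds hp.1 hp.2)
  have hFc : ContinuousOn (fun s => b s ^ 3 * z' s) (Icc p₀ 0) := (hbc.pow 3).mul hzc
  have hGc : ContinuousOn (fun s => b s ^ 3 * w' s) (Icc p₀ 0) := (hbc.pow 3).mul hwc
  -- F z is monotone
  have hFz : MonotoneOn (fun s => b s ^ 3 * z' s * z s) (Icc p₀ 0) := by
    apply monotoneOn_of_hasDerivWithinAt_nonneg (convex_Icc _ _) (hFc.mul hzC)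
      (f' := fun p => μ * b p * z p * z p + b p ^ 3 * z' p * z' p)
    · intro p hp
      rw [interior_Icc] at hp
      exact ((hzode p hp).mul (hz' p hp)).hasDerivWithinAt
    · intro p hp
      rw [interior_Icc] at hp
      have h1 := hbpos p (Ioo_subset_Icc_self hp)
      have : μ * b p * z p * z p + b p ^ 3 * z' p * z' p
        = μ * b p * z p ^ 2 + b p ^ 3 * z' p ^ 2 := by ring
      show 0 ≤ μ * b p * z p * z p + b p ^ 3 * z' p * z' p
      rw [this]; positivity
  have hzz' : ∀ p ∈ Icc p₀ 0, 0 ≤ z' p * z p := by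
    intro p hp
    have h := hFz (left_mem_Icc.2 hc0) hp hp.1
    simp only [hz0, mul_zero] at h
    have h1 := pow_pos (hbpos p hp) 3
    rw [mul_assoc] at h
    exact nonneg_of_mul_nonneg_right h h1
  have hz2 : MonotoneOn (fun s => z s * z s) (Icc p₀ 0) := by
    apply monotoneOn_of_hasDerivWithinAt_nonneg (convex_Icc _ _) (hzC.mul hzC)
      (f' := fun p => z' p * z p + z p * z' p)
    · intro p hp
      rw [interior_Icc] at hp
      exact ((hz' p hp).mul (hz' p hp)).hasDerivWithinAt
    · intro p hp
      rw [interior_Icc] at hp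
      have := hzz' p (Ioo_subset_Icc_self hp)
      show 0 ≤ z' p * z p + z p * z' p
      linarith [mul_comm (z' p) (z p)]
  obtain ⟨q, hq, hzq⟩ : ∃ q ∈ Ioc p₀ 0, 0 < z q := by
    have h := hasDerivWithinAt_iff_tendsto_slope.1 (hz p₀ (left_mem_Icc.2 hc0))
    rw [Icc_sdiff_left, hz1, nhdsWithin_Ioc_eq_nhdsGT hp₀] at h
    have h2 := h.eventually (lt_mem_nhds (zero_lt_one))
    obtain ⟨q, hq1, hq2⟩ := (h2.and (Ioc_mem_nhdsGT hp₀)).exists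
    refine ⟨q, hq2, ?_⟩
    rw [slope_def_field, hz0, sub_zero] at hq1
    exact (div_pos_iff_of_pos_right (sub_pos.2 hq2.1)).1 hq1
  have hz0pos : 0 < z 0 := by
    by_contra hneg
    have hsub : Icc q 0 ⊆ Icc p₀ 0 := Icc_subset_Icc_left hq.1.le
    obtain ⟨r, hr, hr0⟩ := intermediate_value_Icc' hq.2 (hzC.mono hsub)
      (show (0:ℝ) ∈ Icc (z 0) (z q) from ⟨not_lt.1 hneg, hzq.le⟩)
    have := hz2 (hsub (left_mem_Icc.2 hq.2)) (hsub hr) hr.1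
    simp only [hr0, mul_zero] at this
    nlinarith
  -- the primitive
  have hkc : ContinuousOn (fun s => (b s ^ 3)⁻¹) (Icc p₀ 0) :=
    (hbc.pow 3).inv₀ fun p hp => (pow_pos (hbpos p hp) 3).ne'
  have hk0c : ContinuousOn (fun s => (Real.sqrt (lam₀ - 2 * Γ s) ^ 3)⁻¹) (Icc p₀ 0) :=
    (hb0c.pow 3).inv₀ fun p hp => (pow_pos (Real.sqrt_pos.2 (hpos0 p hp)) 3).ne'
  have hki : IntervalIntegrable (fun s => (b s ^ 3)⁻¹) MeasureTheory.volume p₀ 0 :=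
    hkc.intervalIntegrable_of_Icc hc0
  set B : ℝ → ℝ := fun p => ∫ s in p₀..p, (b s ^ 3)⁻¹ with hB
  have hB' : ∀ p ∈ Ioo p₀ 0, HasDerivAt B ((b p ^ 3)⁻¹) p := by
    intro p hp
    apply intervalIntegral.integral_hasDerivAt_right
    · exact (hkc.mono (Icc_subset_Icc_right hp.2.le)).intervalIntegrable_of_Icc hp.1.le
    · exact (hkc.mono Ioo_subset_Icc_self).stronglyMeasurableAtFilter isOpen_Ioo p hp
    · exact hkc.continuousAt (Icc_mem_nhds hp.1 hp.2)
  have hBc : ContinuousOn B (Icc p₀ 0) := by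
    have := intervalIntegral.continuousOn_primitive_interval (a := p₀) (b := 0)
      (f := fun s => (b s ^ 3)⁻¹) (μ := MeasureTheory.volume)
      (by rw [uIcc_of_le hc0]; exact hkc.integrableOn_Icc)
    rwa [uIcc_of_le hc0] at this
  have hB0 : B p₀ = 0 := by simp [hB]
  have hBle : g * B 0 ≤ 1 := by
    rw [← hlam₀']
    apply mul_le_mul_of_nonneg_left _ hg.le
    apply intervalIntegral.integral_mono_on hc0 hki (hk0c.intervalIntegrable_of_Icc hc0)
    intro p hp
    have h1 := Real.sqrt_pos.2 (hpos0 p hp)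
    have h2 : Real.sqrt (lam₀ - 2 * Γ p) ≤ b p := Real.sqrt_le_sqrt (by linarith)
    gcongr
  set c := g * z 0 with hcdef
  set H : ℝ → ℝ := fun p => μ * ((b p ^ 3 * w' p) * z p - (b p ^ 3 * z' p) * w p)
    - (b p ^ 3 * z' p) * z p + 2 * c * z p - c ^ 2 * B p with hH
  have hHc : ContinuousOn H (Icc p₀ 0) :=
    (((continuousOn_const.mul ((hGc.mul hzC).sub (hFc.mul hwC))).sub (hFc.mul hzC)).add
      (continuousOn_const.mul hzC)).sub (continuousOn_const.mul hBc)
  have hH' : ∀ p ∈ Ioo p₀ 0, HasDerivAt H (- ((b p ^ 3)⁻¹ * (b p ^ 3 * z' p - c) ^ 2)) p := by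
    intro p hp
    have h := (((((hwode p hp).mul (hz' p hp)).sub ((hzode p hp).mul (hw' p hp))).const_mul μ
      |>.sub ((hzode p hp).mul (hz' p hp))).add ((hz' p hp).const_mul (2 * c))).sub
      ((hB' p hp).const_mul (c ^ 2))
    refine h.congr_deriv ?_
    have h1 := hbpos p (Ioo_subset_Icc_self hp)
    field_simp
    ring
  have hHanti : AntitoneOn H (Icc p₀ 0) := by
    apply antitoneOn_of_hasDerivWithinAt_nonpos (convex_Icc _ _) hHc
      (f' := fun p => - ((b p ^ 3)⁻¹ * (b p ^ 3 * z' p - c) ^ 2))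
    · intro p hp
      rw [interior_Icc] at hp
      exact (hH' p hp).hasDerivWithinAt
    · intro p hp
      rw [interior_Icc] at hp
      have h1 := hbpos p (Ioo_subset_Icc_self hp)
      exact neg_nonpos.2 (by positivity)
  have hHp : H p₀ = 0 := by simp [hH, hz0, hw0, hB0]
  have hH0 : H 0 < 0 := by
    have hle : H 0 ≤ 0 := (hHanti (left_mem_Icc.2 hc0) (right_mem_Icc.2 hc0) hc0).trans_eq hHp
    refine lt_of_le_of_ne hle fun heq => ?_
    have hcst : ∀ p ∈ Icc p₀ 0, H p = 0 := by
      intro p hp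
      have h1 := hHanti (left_mem_Icc.2 hc0) hp hp.1
      have h2 := hHanti hp (right_mem_Icc.2 hc0) hp.2
      linarith
    have hF : ∀ p ∈ Ioo p₀ 0, b p ^ 3 * z' p = c := by
      intro p hp
      have he : H =ᶠ[nhds p] fun _ => (0:ℝ) := by
        filter_upwards [Icc_mem_nhds hp.1 hp.2] with s hs using hcst s hs
      have h1 := (hH' p hp).unique ((hasDerivAt_const p (0:ℝ)).congr_of_eventuallyEq he)
      have h2 := hbpos p (Ioo_subset_Icc_self hp)
      have h3 : (b p ^ 3)⁻¹ * (b p ^ 3 * z' p - c) ^ 2 = 0 := by linarith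
      have h4 := (mul_eq_zero.1 h3).resolve_left (by positivity)
      have h5 := pow_eq_zero_iff (two_ne_zero) |>.1 h4
      linarith
    have hzz : ∀ p ∈ Ioo p₀ 0, z p = 0 := by
      intro p hp
      have he : (fun s => b s ^ 3 * z' s) =ᶠ[nhds p] fun _ => c := by
        filter_upwards [Ioo_mem_nhds hp.1 hp.2] with s hs using hF s hs
      have h1 := (hzode p hp).unique ((hasDerivAt_const p c).congr_of_eventuallyEq he)
      have h2 := hbpos p (Ioo_subset_Icc_self hp)
      exact (mul_eq_zero.1 h1).resolve_left (by positivity)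
    have hm : p₀ / 2 ∈ Ioo p₀ 0 := ⟨by linarith, by linarith⟩
    have h1 := hF _ hm
    have h2 : z' (p₀ / 2) = 0 := by
      have he : z =ᶠ[nhds (p₀ / 2)] fun _ => (0:ℝ) := by
        filter_upwards [Ioo_mem_nhds hm.1 hm.2] with s hs using hzz s hs
      exact (hz' _ hm).unique ((hasDerivAt_const _ (0:ℝ)).congr_of_eventuallyEq he)
    rw [h2, mul_zero] at h1
    have : 0 < c := mul_pos hg hz0pos
    linarith
  have key : μ * z 0 * (b 0 ^ 3 * w' 0 - σ * z 0 - (g + σ * μ) * w 0)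
      = H 0 - g * z 0 ^ 2 * (1 - g * B 0) := by
    simp only [hH, hzbc, hcdef]
    ring
  have h1 : 0 ≤ g * z 0 ^ 2 * (1 - g * B 0) :=
    mul_nonneg (by positivity) (by linarith)
  have h2 : 0 < μ * z 0 := by positivity
  by_contra hcon
  have := mul_nonneg h2.le (not_lt.1 hcon)
  linarith
end

section
/- Set b(p) := √(λ̄ − 2Γ(p)) (so b(0) = √λ̄) and let μ̄ ≥ 0. Suppose z : [p₀,0] → ℝ is C¹ with z(p₀) = 0, z′(p₀) = 1, p ↦ b(p)³z′(p) is differentiable on (p₀,0) with derivative μ̄·b·z, and λ̄^{3/2}·z′(0) = (g + σμ̄)·z(0). Suppose w : [p₀,0] → ℝ is C¹ with w(p₀) = w′(p₀) = 0 and such that p ↦ b(p)³w′(p) + (3/2)·b(p)·z′(p) is differentiable on (p₀,0) with derivative μ̄·b·w + (μ̄/(2b))·z. Then λ̄^{3/2}·w′(0) + (3/2)·λ̄^{1/2}·z′(0) − (g + σμ̄)·w(0) = (1/z(0))·∫_{p₀}^0 ( (3b(p)/2)·z′(p)² + (μ̄/(2b(p)))·z(p)² ) dp, and this quantity is strictly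 positive. -/
open Set

/-- With `b(p) := √(λ̄ − 2Γ(p))` and `μ̄ ≥ 0`, if `z` solves `(b³z′)′ = μ̄ b z`
with `z(p₀)=0, z′(p₀)=1` and `λ̄^{3/2} z′(0) = (g+σμ̄) z(0)`, and `w(p₀) = w′(p₀) = 0` with
`p ↦ b³w′ + (3/2) b z′` differentiable on `(p₀,0)` with derivative `μ̄ b w + (μ̄/(2b)) z`,
then `λ̄^{3/2} w′(0) + (3/2) λ̄^{1/2} z′(0) − (g+σμ̄) w(0)`
`= (1/z(0)) ∫_{p₀}^0 ((3b/2)(z′)² + (μ̄/(2b)) z²) dp > 0`. -/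
theorem stmt_11 (p₀ g σ lam μ : ℝ) (hp₀ : p₀ < 0) (hg : 0 < g) (hσ : 0 < σ)
    (hlam : 0 < lam) (hμ : 0 ≤ μ)
    (Γ : ℝ → ℝ) (K : NNReal) (hΓ : LipschitzOnWith K Γ (Set.Icc p₀ 0)) (hΓ0 : Γ 0 = 0)
    (hlamΓ : 2 * sSup (Γ '' Set.Icc p₀ 0) < lam)
    (z z' w w' : ℝ → ℝ)
    (hz : ∀ p ∈ Set.Icc p₀ 0, HasDerivWithinAt z (z' p) (Set.Icc p₀ 0) p)
    (hzc : ContinuousOn z' (Set.Icc p₀ 0))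
    (hz0 : z p₀ = 0) (hz1 : z' p₀ = 1)
    (hzode : ∀ p ∈ Set.Ioo p₀ 0,
      HasDerivAt (fun s => Real.sqrt (lam - 2 * Γ s) ^ 3 * z' s)
        (μ * Real.sqrt (lam - 2 * Γ p) * z p) p)
    (hzbc : Real.sqrt lam ^ 3 * z' 0 = (g + σ * μ) * z 0)
    (hw : ∀ p ∈ Set.Icc p₀ 0, HasDerivWithinAt w (w' p) (Set.Icc p₀ 0) p)
    (hwc : ContinuousOn w' (Set.Icc p₀ 0))
    (hw0 : w p₀ = 0) (hw1 : w' p₀ = 0)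
    (hwode : ∀ p ∈ Set.Ioo p₀ 0,
      HasDerivAt
        (fun s => Real.sqrt (lam - 2 * Γ s) ^ 3 * w' s
          + 3 / 2 * Real.sqrt (lam - 2 * Γ s) * z' s)
        (μ * Real.sqrt (lam - 2 * Γ p) * w p
          + μ / (2 * Real.sqrt (lam - 2 * Γ p)) * z p) p) :
    Real.sqrt lam ^ 3 * w' 0 + 3 / 2 * Real.sqrt lam * z' 0 - (g + σ * μ) * w 0
        = (z 0)⁻¹ * ∫ p in p₀..0,
            (3 * Real.sqrt (lam - 2 * Γ p) / 2 * z' p ^ 2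
              + μ / (2 * Real.sqrt (lam - 2 * Γ p)) * z p ^ 2) ∧
      0 < Real.sqrt lam ^ 3 * w' 0 + 3 / 2 * Real.sqrt lam * z' 0 - (g + σ * μ) * w 0 := by
  have h0m : (0:ℝ) ∈ Icc p₀ 0 := ⟨hp₀.le, le_rfl⟩
  have hpm : p₀ ∈ Icc p₀ 0 := ⟨le_rfl, hp₀.le⟩
  have hbdd : BddAbove (Γ '' Icc p₀ 0) := (isCompact_Icc.image_of_continuousOn hΓ.continuousOn).bddAbove
  have hpos : ∀ p ∈ Icc p₀ 0, 0 < lam - 2 * Γ p := by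
    intro p hp
    have := le_csSup hbdd (mem_image_of_mem Γ hp)
    linarith
  have hbc : ContinuousOn (fun p => Real.sqrt (lam - 2 * Γ p)) (Icc p₀ 0) :=
    (continuousOn_const.sub (continuousOn_const.mul hΓ.continuousOn)).sqrt
  have hb0 : Real.sqrt (lam - 2 * Γ 0) = Real.sqrt lam := by simp [hΓ0]
  have hbp : ∀ p ∈ Icc p₀ 0, 0 < Real.sqrt (lam - 2 * Γ p) := fun p hp => Real.sqrt_pos.2 (hpos p hp)
  generalize hb : (fun p => Real.sqrt (lam - 2 * Γ p)) = b at hbc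
  have hbe : ∀ p, Real.sqrt (lam - 2 * Γ p) = b p := fun p => congrFun hb p
  simp only [hbe] at *
  have hzcont : ContinuousOn z (Icc p₀ 0) := fun p hp => (hz p hp).continuousWithinAt
  have hwcont : ContinuousOn w (Icc p₀ 0) := fun p hp => (hw p hp).continuousWithinAt
  have hzd : ∀ p ∈ Ioo p₀ 0, HasDerivAt z (z' p) p := fun p hp =>
    (hz p (Ioo_subset_Icc_self hp)).hasDerivAt (Icc_mem_nhds hp.1 hp.2)
  have hwd : ∀ p ∈ Ioo p₀ 0, HasDerivAt w (w' p) p := fun p hp =>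
    (hw p (Ioo_subset_Icc_self hp)).hasDerivAt (Icc_mem_nhds hp.1 hp.2)
  have hmono : MonotoneOn (fun s => b s ^ 3 * z' s * z s) (Icc p₀ 0) := by
    apply monotoneOn_of_hasDerivWithinAt_nonneg (convex_Icc _ _)
      (f' := fun p => μ * b p * z p * z p + b p ^ 3 * z' p * z' p)
    · fun_prop
    · intro p hp
      rw [interior_Icc] at hp
      exact ((hzode p hp).mul (hzd p hp)).hasDerivWithinAt
    · intro p hp
      rw [interior_Icc] at hp
      have := hbp p (Ioo_subset_Icc_self hp)
      have h1 : 0 ≤ μ * b p * (z p) ^ 2 := by positivity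
      have h2 : 0 ≤ b p ^ 3 * (z' p) ^ 2 := by positivity
      nlinarith
  have hzz : ∀ p ∈ Icc p₀ 0, 0 ≤ z' p * z p := by
    intro p hp
    have h1 := hmono hpm hp hp.1
    simp only [hz0, mul_zero, mul_assoc] at h1
    exact nonneg_of_mul_nonneg_right h1 (pow_pos (hbp p hp) 3)
  have hsq : MonotoneOn (fun s => z s * z s) (Icc p₀ 0) := by
    apply monotoneOn_of_hasDerivWithinAt_nonneg (convex_Icc _ _)
      (f' := fun p => z' p * z p + z p * z' p)
    · fun_prop
    · intro p hp
      rw [interior_Icc] at hp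
      exact ((hzd p hp).mul (hzd p hp)).hasDerivWithinAt
    · intro p hp
      have := hzz p (interior_subset hp)
      linarith
  obtain ⟨p₁, hp₁, hzp₁⟩ : ∃ p ∈ Ioc p₀ 0, 0 < z p := by
    have h := (hz p₀ hpm).mono Ioc_subset_Icc_self
    rw [hasDerivWithinAt_iff_tendsto_slope' (by simp), hz1] at h
    have h2 := h.eventually (lt_mem_nhds zero_lt_one)
    have : (nhdsWithin p₀ (Ioc p₀ 0)).NeBot := by
      rw [nhdsWithin_Ioc_eq_nhdsGT hp₀]; infer_instance
    obtain ⟨p, hp, hpp⟩ := (h2.and self_mem_nhdsWithin).exists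
    refine ⟨p, hpp, ?_⟩
    rw [slope_def_field, hz0, sub_zero] at hp
    exact (div_pos_iff_of_pos_right (sub_pos.2 hpp.1)).1 hp
  have hz0pos : 0 < z 0 := by
    by_contra hneg
    push Not at hneg
    have hsub : Icc p₁ 0 ⊆ Icc p₀ 0 := Icc_subset_Icc_left hp₁.1.le
    obtain ⟨c, hc, hcz⟩ := intermediate_value_Icc' hp₁.2 (hzcont.mono hsub) ⟨hneg, hzp₁.le⟩
    have := hsq (Ioc_subset_Icc_self hp₁) (hsub hc) hc.1
    simp only [hcz] at this
    nlinarith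
  have hbne : ∀ p ∈ Icc p₀ 0, 2 * b p ≠ 0 := fun p hp => by have := hbp p hp; positivity
  have hIc : ContinuousOn (fun p => 3 * b p / 2 * z' p ^ 2 + μ / (2 * b p) * z p ^ 2) (Icc p₀ 0) := by
    have : ContinuousOn (fun p => μ / (2 * b p)) (Icc p₀ 0) :=
      continuousOn_const.div (continuousOn_const.mul hbc) hbne
    fun_prop
  have hint := intervalIntegral.integral_eq_sub_of_hasDerivAt_of_le hp₀.le
    (f := fun s => (b s ^ 3 * w' s + 3 / 2 * b s * z' s) * z s - b s ^ 3 * z' s * w s)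
    (f' := fun p => 3 * b p / 2 * z' p ^ 2 + μ / (2 * b p) * z p ^ 2)
    (by fun_prop)
    (by
      intro p hp
      convert ((hwode p hp).mul (hzd p hp)).sub ((hzode p hp).mul (hwd p hp)) using 1
      · rfl
      · ring)
    (hIc.intervalIntegrable_of_Icc hp₀.le)
  have hIpos : 0 < ∫ p in p₀..0, (3 * b p / 2 * z' p ^ 2 + μ / (2 * b p) * z p ^ 2) := by
    apply intervalIntegral.integral_pos hp₀ hIc
    · intro p hp
      have := hbp p (Ioc_subset_Icc_self hp)
      positivity
    · refine ⟨p₀, hpm, ?_⟩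
      have := hbp p₀ hpm
      rw [hz1, hz0]
      simp only [one_pow, mul_one]
      positivity
  have hEq : Real.sqrt lam ^ 3 * w' 0 + 3 / 2 * Real.sqrt lam * z' 0 - (g + σ * μ) * w 0
      = (z 0)⁻¹ * ∫ p in p₀..0, (3 * b p / 2 * z' p ^ 2 + μ / (2 * b p) * z p ^ 2) := by
    rw [hint, eq_inv_mul_iff_mul_eq₀ hz0pos.ne']
    simp only [hb0, hz0, hw0]
    linear_combination w 0 * hzbc
  refine ⟨hEq, ?_⟩
  rw [hEq]
  exact mul_pos (inv_pos.2 hz0pos) hIpos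
end

section
/- Set b(p) := √(λ₀ − 2Γ(p)) and z(p) := ∫_{p₀}^p b(p₀)³/b(s)³ ds. Suppose w : [p₀,0] → ℝ is C¹ with w(p₀) = w′(p₀) = 0 and p ↦ b(p)³w′(p) is differentiable on (p₀,0) with derivative b·z. Then λ₀^{3/2}·w′(0) − σ·z(0) − g·w(0) ≤ 0 if and only if ∫_{p₀}^0 b(p)·(∫_{p₀}^p b(s)^{−3} ds)² dp ≤ σ/g². -/
open Set

/-- With `b(p) := √(λ₀ − 2Γ(p))` and `z(p) := ∫_{p₀}^p b(p₀)³/b(s)³ ds`, if `w`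
satisfies `w(p₀) = w′(p₀) = 0` and `(b³w′)′ = b z` on `(p₀,0)`, then
`λ₀^{3/2} w′(0) − σ z(0) − g w(0) ≤ 0` iff
`∫_{p₀}^0 b(p)·(∫_{p₀}^p b(s)^{−3} ds)² dp ≤ σ/g²`. -/
theorem stmt_12 (p₀ g σ lam₀ : ℝ) (hp₀ : p₀ < 0) (hg : 0 < g) (hσ : 0 < σ)
    (Γ : ℝ → ℝ) (K : NNReal) (hΓ : LipschitzOnWith K Γ (Set.Icc p₀ 0)) (hΓ0 : Γ 0 = 0)
    (hlam₀ : 2 * sSup (Γ '' Set.Icc p₀ 0) < lam₀)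
    (hlam₀' : g * ∫ p in p₀..0, (Real.sqrt (lam₀ - 2 * Γ p) ^ 3)⁻¹ = 1)
    (w w' : ℝ → ℝ)
    (hw : ∀ p ∈ Set.Icc p₀ 0, HasDerivWithinAt w (w' p) (Set.Icc p₀ 0) p)
    (hwc : ContinuousOn w' (Set.Icc p₀ 0))
    (hw0 : w p₀ = 0) (hw1 : w' p₀ = 0)
    (hwode : ∀ p ∈ Set.Ioo p₀ 0,
      HasDerivAt (fun s => Real.sqrt (lam₀ - 2 * Γ s) ^ 3 * w' s)
        (Real.sqrt (lam₀ - 2 * Γ p)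
          * ∫ s in p₀..p,
              Real.sqrt (lam₀ - 2 * Γ p₀) ^ 3 / Real.sqrt (lam₀ - 2 * Γ s) ^ 3) p) :
    Real.sqrt lam₀ ^ 3 * w' 0
        - σ * (∫ s in p₀..0,
            Real.sqrt (lam₀ - 2 * Γ p₀) ^ 3 / Real.sqrt (lam₀ - 2 * Γ s) ^ 3)
        - g * w 0 ≤ 0 ↔
      (∫ p in p₀..0, Real.sqrt (lam₀ - 2 * Γ p)
          * (∫ s in p₀..p, (Real.sqrt (lam₀ - 2 * Γ s) ^ 3)⁻¹) ^ 2)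
        ≤ σ / g ^ 2 := by
  obtain ⟨b, hb⟩ : ∃ b : ℝ → ℝ, b = fun p => Real.sqrt (lam₀ - 2 * Γ p) := ⟨_, rfl⟩
  have hbp : ∀ p, Real.sqrt (lam₀ - 2 * Γ p) = b p := fun p => by rw [hb]
  have hb0 : Real.sqrt lam₀ = b 0 := by rw [hb]; simp [hΓ0]
  have hΓc : ContinuousOn Γ (Set.Icc p₀ 0) := hΓ.continuousOn
  have hpos : ∀ p ∈ Set.Icc p₀ 0, 0 < b p := by
    intro p hp
    have h1 : Γ p ≤ sSup (Γ '' Set.Icc p₀ 0) :=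
      le_csSup (isCompact_Icc.image_of_continuousOn hΓc).bddAbove (Set.mem_image_of_mem _ hp)
    rw [hb]
    exact Real.sqrt_pos.2 (by linarith)
  have hbc : ContinuousOn b (Set.Icc p₀ 0) := by
    rw [hb]
    exact (continuousOn_const.sub (continuousOn_const.mul hΓc)).sqrt
  simp only [hbp, hb0] at *
  clear hbp hb hb0
  have hic : ContinuousOn (fun s => (b s ^ 3)⁻¹) (Set.Icc p₀ 0) :=
    (hbc.pow 3).inv₀ fun p hp => (pow_pos (hpos p hp) 3).ne'
  have hle : p₀ ≤ 0 := hp₀.le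
  obtain ⟨Y, hY⟩ : ∃ Y : ℝ → ℝ, Y = fun p => ∫ s in p₀..p, (b s ^ 3)⁻¹ := ⟨_, rfl⟩
  have hYp : ∀ p, (∫ s in p₀..p, (b s ^ 3)⁻¹) = Y p := fun p => by rw [hY]
  have hzp : ∀ p, (∫ s in p₀..p, b p₀ ^ 3 / b s ^ 3) = b p₀ ^ 3 * Y p := fun p => by
    simp only [div_eq_mul_inv, intervalIntegral.integral_const_mul, hY]
  have hii : IntervalIntegrable (fun s => (b s ^ 3)⁻¹) MeasureTheory.volume p₀ 0 :=
    ContinuousOn.intervalIntegrable_of_Icc hle hic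
  have hYc : ContinuousOn Y (Set.Icc p₀ 0) := by
    have := intervalIntegral.continuousOn_primitive_interval' hii Set.left_mem_uIcc
    rw [Set.uIcc_of_le hle] at this
    rw [hY]; exact this
  have hYd : ∀ p ∈ Set.Ioo p₀ 0, HasDerivAt Y ((b p ^ 3)⁻¹) p := by
    intro p hp
    rw [hY]
    have hio : ContinuousOn (fun s => (b s ^ 3)⁻¹) (Set.Ioo p₀ 0) := hic.mono Set.Ioo_subset_Icc_self
    refine intervalIntegral.integral_hasDerivAt_right ?_
      (hio.stronglyMeasurableAtFilter isOpen_Ioo p hp) (hio.continuousAt (Ioo_mem_nhds hp.1 hp.2))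
    exact ContinuousOn.intervalIntegrable_of_Icc hp.1.le
      (hic.mono (Set.Icc_subset_Icc_right hp.2.le))
  have hYp0 : Y p₀ = 0 := by rw [hY]; simp
  simp only [hYp, hzp] at *
  clear hYp hzp hY
  have hwcont : ContinuousOn w (Set.Icc p₀ 0) := fun p hp => (hw p hp).continuousWithinAt
  have key := intervalIntegral.integral_eq_sub_of_hasDerivAt_of_le
    (f := fun p => b p ^ 3 * w' p * Y p - w p) (f' := fun p => b p₀ ^ 3 * (b p * Y p ^ 2)) hle
    ((((hbc.pow 3).mul hwc).mul hYc).sub hwcont)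
    (by
      intro p hp
      have h1 := (hw p (Set.Ioo_subset_Icc_self hp)).hasDerivAt (Icc_mem_nhds hp.1 hp.2)
      have h2 := ((hwode p hp).mul (hYd p hp)).sub h1
      refine h2.congr_deriv ?_
      have := (hpos p (Set.Ioo_subset_Icc_self hp)).ne'
      field_simp
      ring)
    (ContinuousOn.intervalIntegrable_of_Icc hle
      (continuousOn_const.mul (hbc.mul (hYc.pow 2))))
  rw [intervalIntegral.integral_const_mul] at key
  simp only [hw0, hw1, hYp0] at key
  generalize (∫ p in p₀..0, b p * Y p ^ 2) = I at *
  have hc : 0 < b p₀ ^ 3 := pow_pos (hpos p₀ (Set.left_mem_Icc.2 hle)) 3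
  have hY0 : Y 0 = 1 / g := by field_simp; linarith
  rw [hY0] at key ⊢
  have e : b 0 ^ 3 * w' 0 - σ * (b p₀ ^ 3 * (1 / g)) - g * w 0
      = b p₀ ^ 3 * g * (I - σ / g ^ 2) := by
    have : w 0 = b 0 ^ 3 * w' 0 * (1 / g) - b p₀ ^ 3 * I := by linarith
    rw [this]
    field_simp
    ring
  rw [e, ← smul_eq_mul, smul_nonpos_iff_nonpos_of_pos_left (mul_pos hc hg), sub_nonpos]
end

section
/- There exists a continuous, strictly increasing function m : (λ₀, ∞) → (0, ∞), real-analytic on (λ₀,∞), such that for every λ > λ₀ and every μ ≥ 0 one has Ξ(λ, μ) = 0 if and only if μ = m(λ). -/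
open Set

/-- Solutions of the Sturm–Liouville initial value problem with weights `ρ`, `β`. -/
structure SLSol (p₀ : ℝ) (ρ β : ℝ → ℝ) (μ : ℝ) (z z' : ℝ → ℝ) : Prop where
  hz : ∀ p ∈ Icc p₀ 0, HasDerivWithinAt z (z' p) (Icc p₀ 0) p
  hzc : ContinuousOn z' (Icc p₀ 0)
  hz0 : z p₀ = 0
  hz1 : z' p₀ = 1
  hode : ∀ p ∈ Ioo p₀ 0, HasDerivAt (fun s => ρ s * z' s) (μ * β p * z p) p

/-- The energy functional. -/
noncomputable def slQ (p₀ : ℝ) (ρ β : ℝ → ℝ) (μ : ℝ) (w w' : ℝ → ℝ) : ℝ :=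
  ∫ p in p₀..0, (ρ p * w' p ^ 2 + μ * β p * w p ^ 2)

/-- Admissible test functions. -/
structure SLTest (p₀ : ℝ) (w w' : ℝ → ℝ) : Prop where
  hw : ∀ p ∈ Icc p₀ 0, HasDerivWithinAt w (w' p) (Icc p₀ 0) p
  hwc : ContinuousOn w' (Icc p₀ 0)
  hw0 : w p₀ = 0

theorem SLTest.cont {p₀ : ℝ} {w w' : ℝ → ℝ} (h : SLTest p₀ w w') : ContinuousOn w (Icc p₀ 0) :=
  fun p hp => (h.hw p hp).continuousWithinAt

theorem SLSol.test {p₀ : ℝ} {ρ β : ℝ → ℝ} {μ : ℝ} {z z' : ℝ → ℝ}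
    (h : SLSol p₀ ρ β μ z z') : SLTest p₀ z z' := ⟨h.hz, h.hzc, h.hz0⟩

theorem SLTest.comb {p₀ : ℝ} {w w' v v' : ℝ → ℝ} (h : SLTest p₀ w w') (hv : SLTest p₀ v v')
    (c : ℝ) : SLTest p₀ (fun p => w p - c * v p) (fun p => w' p - c * v' p) := by
  refine ⟨fun p hp => (h.hw p hp).sub ((hv.hw p hp).const_mul c), ?_, by simp [h.hw0, hv.hw0]⟩
  exact h.hwc.sub (continuousOn_const.mul hv.hwc)

theorem SLTest.smul {p₀ : ℝ} {v v' : ℝ → ℝ} (hv : SLTest p₀ v v')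
    (c : ℝ) : SLTest p₀ (fun p => c * v p) (fun p => c * v' p) := by
  refine ⟨fun p hp => ((hv.hw p hp).const_mul c), ?_, by simp [hv.hw0]⟩
  exact (continuousOn_const.mul hv.hwc)

theorem ii_of_cont {p₀ : ℝ} (hp₀ : p₀ < 0) {f : ℝ → ℝ} (h : ContinuousOn f (Icc p₀ 0)) :
    IntervalIntegrable f MeasureTheory.volume p₀ 0 :=
  ContinuousOn.intervalIntegrable (by rwa [uIcc_of_le hp₀.le])

theorem SLSol.parts {p₀ : ℝ} (hp₀ : p₀ < 0) {ρ β : ℝ → ℝ} (hρ : ContinuousOn ρ (Icc p₀ 0))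
    (hβ : ContinuousOn β (Icc p₀ 0)) {μ : ℝ} {z z' w w' : ℝ → ℝ}
    (h : SLSol p₀ ρ β μ z z') (hw : SLTest p₀ w w') :
    ∫ p in p₀..0, (ρ p * z' p * w' p + μ * β p * z p * w p) = ρ 0 * z' 0 * w 0 := by
  have hzC := h.test.cont
  have hzc := h.hzc
  have hwC := hw.cont
  have hwc := hw.hwc
  have := intervalIntegral.integral_eq_sub_of_hasDerivAt_of_le (a := p₀) (b := 0)
    (f := fun p => ρ p * z' p * w p)
    (f' := fun p => (ρ p * z' p * w' p + μ * β p * z p * w p)) hp₀.le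
    (by fun_prop) ?_ (ii_of_cont hp₀ (by fun_prop))
  · rw [this, hw.hw0]; ring
  · intro p hp
    have h1 := h.hode p hp
    have h2 := (hw.hw p (Ioo_subset_Icc_self hp)).hasDerivAt (Icc_mem_nhds hp.1 hp.2)
    exact (h1.mul h2).congr_deriv (by ring)

theorem SLSol.energy {p₀ : ℝ} (hp₀ : p₀ < 0) {ρ β : ℝ → ℝ} (hρ : ContinuousOn ρ (Icc p₀ 0))
    (hβ : ContinuousOn β (Icc p₀ 0)) {μ : ℝ} {z z' : ℝ → ℝ}
    (h : SLSol p₀ ρ β μ z z') :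
    slQ p₀ ρ β μ z z' = ρ 0 * z' 0 * z 0 := by
  rw [← h.parts hp₀ hρ hβ h.test, slQ]
  congr 1; ext p; ring

theorem slQ_nonneg {p₀ : ℝ} (hp₀ : p₀ < 0) {ρ β : ℝ → ℝ}
    (hρ0 : ∀ p ∈ Icc p₀ 0, 0 < ρ p) (hβ0 : ∀ p ∈ Icc p₀ 0, 0 < β p) {μ : ℝ} (hμ : 0 ≤ μ)
    (w w' : ℝ → ℝ) : 0 ≤ slQ p₀ ρ β μ w w' := by
  apply intervalIntegral.integral_nonneg hp₀.le
  intro p hp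
  have := hρ0 p hp
  have := hβ0 p hp
  positivity

theorem SLSol.z0_ne {p₀ : ℝ} (hp₀ : p₀ < 0) {ρ β : ℝ → ℝ} (hρ : ContinuousOn ρ (Icc p₀ 0))
    (hβ : ContinuousOn β (Icc p₀ 0))
    (hρ0 : ∀ p ∈ Icc p₀ 0, 0 < ρ p) (hβ0 : ∀ p ∈ Icc p₀ 0, 0 < β p) {μ : ℝ} (hμ : 0 ≤ μ)
    {z z' : ℝ → ℝ} (h : SLSol p₀ ρ β μ z z') : z 0 ≠ 0 := by
  have hzC := h.test.cont
  have hzc := h.hzc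
  have : 0 < slQ p₀ ρ β μ z z' := by
    have := intervalIntegral.integral_lt_integral_of_continuousOn_of_le_of_exists_lt
      (f := fun _ => (0 : ℝ)) (g := fun p => ρ p * z' p ^ 2 + μ * β p * z p ^ 2) hp₀
      (by fun_prop) (by fun_prop) ?_ ⟨p₀, left_mem_Icc.2 hp₀.le, ?_⟩
    · simpa [slQ] using this
    · intro p hp
      have := hρ0 p (Ioc_subset_Icc_self hp)
      have := hβ0 p (Ioc_subset_Icc_self hp)
      positivity
    · simp [h.hz1, h.hz0, hρ0 p₀ (left_mem_Icc.2 hp₀.le)]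
  intro h0
  rw [h.energy hp₀ hρ hβ, h0] at this
  simp at this

theorem SLSol.le_slQ {p₀ : ℝ} (hp₀ : p₀ < 0) {ρ β : ℝ → ℝ} (hρ : ContinuousOn ρ (Icc p₀ 0))
    (hβ : ContinuousOn β (Icc p₀ 0))
    (hρ0 : ∀ p ∈ Icc p₀ 0, 0 < ρ p) (hβ0 : ∀ p ∈ Icc p₀ 0, 0 < β p) {μ : ℝ} (hμ : 0 ≤ μ)
    {z z' w w' : ℝ → ℝ} (h : SLSol p₀ ρ β μ z z') (hw : SLTest p₀ w w') (hw1 : w 0 = 1) :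
    ρ 0 * z' 0 / z 0 ≤ slQ p₀ ρ β μ w w' := by
  have hzC := h.test.cont
  have hzc := h.hzc
  have hwC := hw.cont
  have hwc := hw.hwc
  have hne := h.z0_ne hp₀ hρ hβ hρ0 hβ0 hμ
  set c := (z 0)⁻¹ with hc
  have h1 := slQ_nonneg hp₀ hρ0 hβ0 hμ (fun p => w p - c * z p) (fun p => w' p - c * z' p)
  have h2 := h.parts hp₀ hρ hβ hw
  have h3 := h.energy hp₀ hρ hβ
  have h4 : slQ p₀ ρ β μ w w' = slQ p₀ ρ β μ (fun p => w p - c * z p) (fun p => w' p - c * z' p)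
      + 2 * c * (∫ p in p₀..0, (ρ p * z' p * w' p + μ * β p * z p * w p))
      - c ^ 2 * slQ p₀ ρ β μ z z' := by
    unfold slQ
    rw [← intervalIntegral.integral_const_mul, ← intervalIntegral.integral_const_mul,
      ← intervalIntegral.integral_add (ii_of_cont hp₀ (by fun_prop))
        (ii_of_cont hp₀ (by fun_prop)),
      ← intervalIntegral.integral_sub (ii_of_cont hp₀ (by fun_prop))
        (ii_of_cont hp₀ (by fun_prop))]
    congr 1; ext p; ring
  rw [h4, h2, h3, hw1, div_eq_mul_inv, ← hc]
  have : c * z 0 = 1 := inv_mul_cancel₀ hne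
  have : c ^ 2 * (ρ 0 * z' 0 * z 0) = ρ 0 * z' 0 * c := by
    linear_combination (c * ρ 0 * z' 0) * this
  linarith

theorem slQ_smul {p₀ : ℝ} (ρ β : ℝ → ℝ) (μ c : ℝ) (w w' : ℝ → ℝ) :
    slQ p₀ ρ β μ (fun p => c * w p) (fun p => c * w' p) = c ^ 2 * slQ p₀ ρ β μ w w' := by
  unfold slQ
  rw [← intervalIntegral.integral_const_mul]
  congr 1; ext p; ring

theorem SLSol.eq_slQ {p₀ : ℝ} (hp₀ : p₀ < 0) {ρ β : ℝ → ℝ} (hρ : ContinuousOn ρ (Icc p₀ 0))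
    (hβ : ContinuousOn β (Icc p₀ 0))
    (hρ0 : ∀ p ∈ Icc p₀ 0, 0 < ρ p) (hβ0 : ∀ p ∈ Icc p₀ 0, 0 < β p) {μ : ℝ} (hμ : 0 ≤ μ)
    {z z' : ℝ → ℝ} (h : SLSol p₀ ρ β μ z z') :
    slQ p₀ ρ β μ (fun p => (z 0)⁻¹ * z p) (fun p => (z 0)⁻¹ * z' p) = ρ 0 * z' 0 / z 0 := by
  have hne := h.z0_ne hp₀ hρ hβ hρ0 hβ0 hμ
  rw [slQ_smul, h.energy hp₀ hρ hβ]
  field_simp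

/-- Same weights, different spectral parameters: a supergradient inequality. -/
theorem SLSol.supergrad {p₀ : ℝ} (hp₀ : p₀ < 0) {ρ β : ℝ → ℝ} (hρ : ContinuousOn ρ (Icc p₀ 0))
    (hβ : ContinuousOn β (Icc p₀ 0))
    (hρ0 : ∀ p ∈ Icc p₀ 0, 0 < ρ p) (hβ0 : ∀ p ∈ Icc p₀ 0, 0 < β p) {μ₁ : ℝ} (hμ₁ : 0 ≤ μ₁)
    {z z' : ℝ → ℝ} (h : SLSol p₀ ρ β μ₁ z z') :
    ∃ S : ℝ, ∀ (μ : ℝ) (v v' : ℝ → ℝ), 0 ≤ μ → SLSol p₀ ρ β μ v v' →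
      ρ 0 * v' 0 / v 0 ≤ ρ 0 * z' 0 / z 0 + (μ - μ₁) * S := by
  have hzC := h.test.cont
  have hzc := h.hzc
  have hne := h.z0_ne hp₀ hρ hβ hρ0 hβ0 hμ₁
  refine ⟨∫ p in p₀..0, β p * ((z 0)⁻¹ * z p) ^ 2, fun μ v v' hμ hv => ?_⟩
  refine (hv.le_slQ hp₀ hρ hβ hρ0 hβ0 hμ (h.test.smul (z 0)⁻¹) (inv_mul_cancel₀ hne)).trans_eq ?_
  rw [← h.eq_slQ hp₀ hρ hβ hρ0 hβ0 hμ₁]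
  unfold slQ
  rw [← intervalIntegral.integral_const_mul,
      ← intervalIntegral.integral_add (ii_of_cont hp₀ (by fun_prop))
        (ii_of_cont hp₀ (by fun_prop))]
  congr 1; ext p; ring

/-- Strict monotonicity in the weights. -/
theorem SLSol.mono {p₀ : ℝ} (hp₀ : p₀ < 0) {ρ β ρ₂ β₂ : ℝ → ℝ} (hρ : ContinuousOn ρ (Icc p₀ 0))
    (hβ : ContinuousOn β (Icc p₀ 0)) (hρ₂ : ContinuousOn ρ₂ (Icc p₀ 0))
    (hβ₂ : ContinuousOn β₂ (Icc p₀ 0))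
    (hρ0 : ∀ p ∈ Icc p₀ 0, 0 < ρ p) (hβ0 : ∀ p ∈ Icc p₀ 0, 0 < β p)
    (hρl : ∀ p ∈ Icc p₀ 0, ρ p < ρ₂ p) (hβl : ∀ p ∈ Icc p₀ 0, β p < β₂ p)
    {μ : ℝ} (hμ : 0 ≤ μ)
    {z z' v v' : ℝ → ℝ} (h : SLSol p₀ ρ β μ z z') (hv : SLSol p₀ ρ₂ β₂ μ v v') :
    ρ 0 * z' 0 / z 0 < ρ₂ 0 * v' 0 / v 0 := by
  have hzC := hv.test.cont
  have hzc := hv.hzc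
  have hρ0' : ∀ p ∈ Icc p₀ 0, 0 < ρ₂ p := fun p hp => (hρ0 p hp).trans (hρl p hp)
  have hβ0' : ∀ p ∈ Icc p₀ 0, 0 < β₂ p := fun p hp => (hβ0 p hp).trans (hβl p hp)
  have hne := hv.z0_ne hp₀ hρ₂ hβ₂ hρ0' hβ0' hμ
  refine (h.le_slQ hp₀ hρ hβ hρ0 hβ0 hμ (hv.test.smul (v 0)⁻¹) (inv_mul_cancel₀ hne)).trans_lt ?_
  rw [← hv.eq_slQ hp₀ hρ₂ hβ₂ hρ0' hβ0' hμ]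
  unfold slQ
  apply intervalIntegral.integral_lt_integral_of_continuousOn_of_le_of_exists_lt hp₀
      (by fun_prop) (by fun_prop)
  · intro p hp
    have h1 := hρl p (Ioc_subset_Icc_self hp)
    have h2 := hβl p (Ioc_subset_Icc_self hp)
    gcongr
  · refine ⟨p₀, left_mem_Icc.2 hp₀.le, ?_⟩
    have h1 := hρl p₀ (left_mem_Icc.2 hp₀.le)
    have : 0 < ((v 0)⁻¹) ^ 2 := by positivity
    simp only [hv.hz0, hv.hz1]
    simpa using mul_lt_mul_of_pos_right h1 this

/-- Large spectral parameter: sublinear growth with arbitrarily small slope. -/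
theorem SLSol.small_slope {p₀ : ℝ} (hp₀ : p₀ < 0) {ρ β : ℝ → ℝ} (hρ : ContinuousOn ρ (Icc p₀ 0))
    (hβ : ContinuousOn β (Icc p₀ 0))
    (hρ0 : ∀ p ∈ Icc p₀ 0, 0 < ρ p) (hβ0 : ∀ p ∈ Icc p₀ 0, 0 < β p) {σ : ℝ} (hσ : 0 < σ) :
    ∃ C S : ℝ, S < σ ∧ ∀ (μ : ℝ) (v v' : ℝ → ℝ), 0 ≤ μ → SLSol p₀ ρ β μ v v' →
      ρ 0 * v' 0 / v 0 ≤ C + μ * S := by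
  obtain ⟨M, hM⟩ := isCompact_Icc.exists_bound_of_continuousOn hβ
  obtain ⟨n, hn⟩ := exists_nat_gt (M * (-p₀) / σ)
  have hM0 : 0 ≤ M := (norm_nonneg _).trans (hM p₀ (left_mem_Icc.2 hp₀.le))
  set L := -p₀ with hL
  have hLpos : 0 < L := by linarith
  let w : ℝ → ℝ := fun p => ((p - p₀) / L) ^ (n + 1)
  let w' : ℝ → ℝ := fun p => ((n + 1 : ℕ) : ℝ) * ((p - p₀) / L) ^ n * (1 / L)
  have hw : SLTest p₀ w w' := by
    refine ⟨fun p _ => ?_, by fun_prop, by simp [w]⟩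
    have := ((((hasDerivAt_id p).sub_const p₀).div_const L).pow (n + 1)).hasDerivWithinAt
      (s := Icc p₀ 0)
    refine HasDerivWithinAt.congr_deriv this ?_
    simp [w']
  have hw1 : w 0 = 1 := by
    have : (0 - p₀) / L = 1 := by rw [hL, zero_sub]; exact div_self hLpos.ne'
    simp only [w, this, one_pow]
  have hwC := hw.cont
  have hwc := hw.hwc
  refine ⟨∫ p in p₀..0, ρ p * w' p ^ 2, ∫ p in p₀..0, β p * w p ^ 2, ?_, ?_⟩
  · have hle : ∫ p in p₀..0, β p * w p ^ 2 ≤ ∫ p in p₀..0, M * ((p - p₀) / L) ^ (2 * n + 2) := by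
      apply intervalIntegral.integral_mono_on hp₀.le (ii_of_cont hp₀ (by fun_prop))
        (ii_of_cont hp₀ (by fun_prop))
      intro p hp
      have h1 : β p ≤ M := (le_abs_self _).trans (hM p hp)
      have h2 : w p ^ 2 = ((p - p₀) / L) ^ (2 * n + 2) := by simp only [w]; ring
      rw [h2]
      have : 0 ≤ (p - p₀) / L := div_nonneg (by linarith [hp.1]) hLpos.le
      gcongr
    have hval : ∫ p in p₀..0, M * ((p - p₀) / L) ^ (2 * n + 2) = M * L / (2 * n + 3) := by
      rw [intervalIntegral.integral_const_mul]
      simp_rw [div_pow]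
      rw [intervalIntegral.integral_div, intervalIntegral.integral_comp_sub_right (fun x => x ^ (2 * n + 2)), integral_pow]
      have : (0 : ℝ) - p₀ = L := by simp [hL]
      rw [this]
      push_cast
      simp
      field_simp
      ring
    rw [hval] at hle
    refine hle.trans_lt ?_
    rw [div_lt_iff₀ hσ] at hn
    rw [div_lt_iff₀ (by positivity)]
    have : (0:ℝ) ≤ n := Nat.cast_nonneg n
    nlinarith
  · intro μ v v' hμ hv
    refine (hv.le_slQ hp₀ hρ hβ hρ0 hβ0 hμ hw hw1).trans_eq ?_
    unfold slQ
    rw [← intervalIntegral.integral_const_mul,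
      ← intervalIntegral.integral_add (ii_of_cont hp₀ (by fun_prop))
        (ii_of_cont hp₀ (by fun_prop))]
    congr 1; ext p; ring


section Volterra

variable {p₀ : ℝ}

/-- The Volterra integration operator on `C([p₀,0])`. -/
noncomputable def volJ (hp : p₀ ≤ 0) : C(Icc p₀ 0, ℝ) →L[ℝ] C(Icc p₀ 0, ℝ) :=
  LinearMap.mkContinuous
    { toFun := fun f =>
        ⟨fun x => ∫ t in p₀..(x : ℝ), IccExtend hp f t,
          (intervalIntegral.continuous_primitive
            (fun a b => (f.continuous.Icc_extend' (h := hp)).intervalIntegrable a b) p₀).comp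
            continuous_subtype_val⟩
      map_add' := fun f g => by
        ext x
        simp only [ContinuousMap.coe_mk, ContinuousMap.add_apply]
        rw [← intervalIntegral.integral_add
          ((f.continuous.Icc_extend' (h := hp)).intervalIntegrable _ _)
          ((g.continuous.Icc_extend' (h := hp)).intervalIntegrable _ _)]
        rfl
      map_smul' := fun c f => by
        ext x
        simp only [ContinuousMap.coe_mk, ContinuousMap.smul_apply, smul_eq_mul, RingHom.id_apply]
        rw [← intervalIntegral.integral_const_mul]
        rfl }
    (-p₀)
    (fun f => by
      rw [ContinuousMap.norm_le _ (mul_nonneg (by linarith) (norm_nonneg _))]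
      intro x
      have := intervalIntegral.norm_integral_le_of_norm_le_const (a := p₀) (b := (x : ℝ))
        (f := IccExtend hp f) (C := ‖f‖) (fun t _ => f.norm_coe_le_norm _)
      refine this.trans ?_
      rw [mul_comm, abs_of_nonneg (by linarith [x.2.1])]
      gcongr
      linarith [x.2.2])

theorem volJ_apply (hp : p₀ ≤ 0) (f : C(Icc p₀ 0, ℝ)) (F : ℝ → ℝ)
    (hF : ∀ t (ht : t ∈ Icc p₀ 0), f ⟨t, ht⟩ = F t) (x : Icc p₀ 0) :
    volJ hp f x = ∫ t in p₀..(x : ℝ), F t := by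
  change ∫ t in p₀..(x : ℝ), IccExtend hp f t = _
  apply intervalIntegral.integral_congr
  intro t ht
  rw [uIcc_of_le x.2.1] at ht
  have ht' : t ∈ Icc p₀ 0 := ⟨ht.1, ht.2.trans x.2.2⟩
  change IccExtend hp f t = F t
  rw [IccExtend_of_mem hp f ht', hF]

theorem volJ_bound (hp : p₀ ≤ 0) (f : C(Icc p₀ 0, ℝ)) (A : ℝ) (n : ℕ)
    (h : ∀ x, |f x| ≤ A * ((x - p₀) ^ n / n.factorial)) (x : Icc p₀ 0) :
    |volJ hp f x| ≤ A * ((x - p₀) ^ (n + 1) / (n + 1).factorial) := by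
  rw [volJ_apply hp f (IccExtend hp f) (fun t ht => by rw [IccExtend_of_mem])]
  have h1 := intervalIntegral.norm_integral_le_of_norm_le (a := p₀) (b := (x : ℝ))
    (f := IccExtend hp f) (g := fun t => A * ((t - p₀) ^ n / n.factorial)) (μ := MeasureTheory.volume) x.2.1
    (Filter.Eventually.of_forall fun t ht => by
      have ht' : t ∈ Icc p₀ 0 := ⟨ht.1.le, ht.2.trans x.2.2⟩
      rw [IccExtend_of_mem hp f ht']
      exact h ⟨t, ht'⟩)
    (Continuous.intervalIntegrable (by fun_prop) _ _)
  refine h1.trans_eq ?_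
  rw [intervalIntegral.integral_const_mul, intervalIntegral.integral_div,
    intervalIntegral.integral_comp_sub_right (fun x => x ^ n), integral_pow]
  have : ((n : ℝ) + 1) ≠ 0 := by positivity
  have : ((n.factorial : ℝ)) ≠ 0 := by positivity
  simp only [Nat.factorial_succ, sub_self, Nat.cast_mul, Nat.cast_succ, ne_eq, Nat.succ_ne_zero,
    not_false_eq_true, zero_pow, sub_zero]
  field_simp

/-- Multiplication followed by integration. -/
noncomputable def volW (hp : p₀ ≤ 0) (r : C(Icc p₀ 0, ℝ)) :
    C(Icc p₀ 0, ℝ) →L[ℝ] C(Icc p₀ 0, ℝ) :=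
  volJ hp * ContinuousLinearMap.mul ℝ C(Icc p₀ 0, ℝ) r

theorem volW_apply (hp : p₀ ≤ 0) (r f : C(Icc p₀ 0, ℝ)) : volW hp r f = volJ hp (r * f) := rfl

theorem volW_bound (hp : p₀ ≤ 0) (r f : C(Icc p₀ 0, ℝ)) (A : ℝ) (n : ℕ)
    (h : ∀ x, |f x| ≤ A * ((x - p₀) ^ n / n.factorial)) (x : Icc p₀ 0) :
    |volW hp r f x| ≤ (‖r‖ * A) * ((x - p₀) ^ (n + 1) / (n + 1).factorial) := by
  apply volJ_bound
  intro x
  change |r x * f x| ≤ _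
  rw [abs_mul, mul_assoc]
  gcongr
  · exact r.norm_coe_le_norm x
  · exact h x

theorem volW_pow_bound (hp : p₀ ≤ 0) (r s f : C(Icc p₀ 0, ℝ)) (n : ℕ) (x : Icc p₀ 0) :
    |((volW hp r * volW hp s) ^ n) f x| ≤
      ((‖r‖ * ‖s‖) ^ n * ‖f‖) * ((x - p₀) ^ (2 * n) / (2 * n).factorial) := by
  induction n generalizing x with
  | zero => simpa using f.norm_coe_le_norm x
  | succ n ih =>
    rw [pow_succ']
    have h1 := volW_bound hp r _ _ _ (volW_bound hp s _ _ _ ih) x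
    refine h1.trans_eq ?_
    rw [show 2 * (n + 1) = 2 * n + 1 + 1 by ring]
    ring

theorem isUnit_one_sub_volW (hp : p₀ ≤ 0) (r s : C(Icc p₀ 0, ℝ)) :
    IsUnit (1 - volW hp r * volW hp s) := by
  set T := volW hp r * volW hp s with hT
  set κ := 1 + ‖r‖ * ‖s‖ with hκ
  have hκ1 : 1 ≤ κ := by rw [hκ]; linarith [mul_nonneg (norm_nonneg r) (norm_nonneg s)]
  have hbd : ∀ n : ℕ, ‖T ^ n‖ ≤ (κ * (-p₀)) ^ (2 * n) / (2 * n).factorial := by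
    intro n
    apply ContinuousLinearMap.opNorm_le_bound
    · rw [pow_mul]; positivity
    intro f
    rw [ContinuousMap.norm_le _ (by rw [pow_mul]; positivity)]
    intro x
    refine (volW_pow_bound hp r s f n x).trans ?_
    have h1 : (‖r‖ * ‖s‖) ^ n ≤ κ ^ (2 * n) := by
      rw [pow_mul]
      gcongr
      nlinarith
    have h2 : ((x : ℝ) - p₀) ^ (2 * n) ≤ (-p₀) ^ (2 * n) := by
      have := x.2.1
      have := x.2.2
      gcongr
      linarith
    have h3 : 0 ≤ ((x : ℝ) - p₀) ^ (2 * n) := by rw [pow_mul]; positivity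
    calc (‖r‖ * ‖s‖) ^ n * ‖f‖ * (((x : ℝ) - p₀) ^ (2 * n) / (2 * n).factorial)
        ≤ κ ^ (2 * n) * ‖f‖ * ((-p₀) ^ (2 * n) / (2 * n).factorial) := by gcongr
      _ = _ := by rw [mul_pow]; ring
  have hlim := FloorSemiring.tendsto_pow_div_factorial_atTop (κ * (-p₀))
  have hlim2 := hlim.comp (Filter.tendsto_id.const_mul_atTop' (show 0 < 2 by norm_num))
  obtain ⟨n, hn⟩ := (hlim2.eventually (gt_mem_nhds one_pos)).exists
  have hn1 : ‖T ^ n‖ < 1 := (hbd n).trans_lt hn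
  have hu : IsUnit (1 - T ^ n) :=
    @isUnit_one_sub_of_norm_lt_one (C(Icc p₀ 0, ℝ) →L[ℝ] C(Icc p₀ 0, ℝ)) _ _ (T ^ n) hn1
  have hfac : (1 - T) * (∑ i ∈ Finset.range n, T ^ i) = 1 - T ^ n := mul_neg_geom_sum T n
  have hcomm : Commute (1 - T) (∑ i ∈ Finset.range n, T ^ i) := by
    rw [Commute, SemiconjBy, hfac, geom_sum_mul_neg]
  rw [← hfac] at hu
  exact (hcomm.isUnit_mul_iff.1 hu).1

end Volterra
section Analytic

variable {p₀ : ℝ}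

/-- The function `b(·;λ)` as an element of `C([p₀,0])`. -/
noncomputable def bE (G : C(Icc p₀ 0, ℝ)) (lam : ℝ) : C(Icc p₀ 0, ℝ) :=
  ⟨fun x => Real.sqrt (lam - 2 * G x), by fun_prop⟩

theorem bE_apply (G : C(Icc p₀ 0, ℝ)) (lam : ℝ) (x : Icc p₀ 0) :
    bE G lam x = Real.sqrt (lam - 2 * G x) := rfl

theorem continuous_bE (G : C(Icc p₀ 0, ℝ)) : Continuous (bE G) := by
  apply ContinuousMap.continuous_of_continuous_uncurry
  change Continuous fun q : ℝ × Icc p₀ 0 => Real.sqrt (q.1 - 2 * G q.2)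
  fun_prop

theorem isUnit_bE (G : C(Icc p₀ 0, ℝ)) {lam : ℝ} (h : ∀ x, 0 < lam - 2 * G x) :
    IsUnit (bE G lam) := by
  rw [ContinuousMap.isUnit_iff_forall_ne_zero]
  intro x
  exact (Real.sqrt_pos.2 (h x)).ne'

theorem analyticAt_bE (G : C(Icc p₀ 0, ℝ)) {lam : ℝ} (h : ∀ x, 0 < lam - 2 * G x) :
    AnalyticAt ℝ (bE G) lam := by
  let f : ℝ × C(Icc p₀ 0, ℝ) → C(Icc p₀ 0, ℝ) :=
    fun v => v.2 * v.2 - (v.1 • (1 : C(Icc p₀ 0, ℝ)) - (2 : ℝ) • G)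
  have hzero : ∀ l, (∀ x, 0 < l - 2 * G x) → f (l, bE G l) = 0 := by
    intro l hl
    ext x
    simp only [f, ContinuousMap.sub_apply, ContinuousMap.mul_apply, ContinuousMap.smul_apply,
      ContinuousMap.one_apply, bE_apply, ContinuousMap.zero_apply, smul_eq_mul, mul_one]
    rw [Real.mul_self_sqrt (hl x).le, sub_self]
  have hcd : ContDiffAt ℝ ⊤ f (lam, bE G lam) := by
    apply AnalyticAt.contDiffAt
    have h2 : AnalyticAt ℝ (fun v : ℝ × C(Icc p₀ 0, ℝ) => v.2) (lam, bE G lam) := analyticAt_snd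
    have h1 : AnalyticAt ℝ (fun v : ℝ × C(Icc p₀ 0, ℝ) => v.1) (lam, bE G lam) := analyticAt_fst
    exact (h2.mul h2).sub ((h1.smul analyticAt_const).sub analyticAt_const)
  have hinv : (fderiv ℝ f (lam, bE G lam) ∘L .inr ℝ ℝ C(Icc p₀ 0, ℝ)).IsInvertible := by
    obtain ⟨w, hw⟩ := isUnit_bE G h
    have hdiff : DifferentiableAt ℝ f (lam, bE G lam) := hcd.differentiableAt (by simp)
    have hcomp := hdiff.hasFDerivAt.comp (bE G lam) (hasFDerivAt_prodMk_right lam (bE G lam))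
    have hdir : HasFDerivAt (f ∘ fun x => (lam, x))
        (bE G lam • ContinuousLinearMap.id ℝ C(Icc p₀ 0, ℝ)
          + bE G lam • ContinuousLinearMap.id ℝ C(Icc p₀ 0, ℝ)) (bE G lam) :=
      ((hasFDerivAt_id (𝕜 := ℝ) (bE G lam)).mul (hasFDerivAt_id (𝕜 := ℝ) (bE G lam))).sub_const
        (lam • (1 : C(Icc p₀ 0, ℝ)) - (2 : ℝ) • G)
    rw [hcomp.unique hdir]
    refine ⟨ContinuousLinearEquiv.equivOfInverse
      (bE G lam • ContinuousLinearMap.id ℝ C(Icc p₀ 0, ℝ)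
          + bE G lam • ContinuousLinearMap.id ℝ C(Icc p₀ 0, ℝ))
      (ContinuousLinearMap.mul ℝ C(Icc p₀ 0, ℝ) ((1 / 2 : ℝ) • (↑w⁻¹ : C(Icc p₀ 0, ℝ)))) ?_ ?_, rfl⟩
    · intro y
      change ((1 / 2 : ℝ) • (↑w⁻¹ : C(Icc p₀ 0, ℝ))) * (bE G lam * y + bE G lam * y) = y
      rw [← hw, ← mul_add, smul_mul_assoc, ← mul_assoc, Units.inv_mul, one_mul, ← two_smul ℝ y,
        smul_smul]
      norm_num
    · intro y
      change bE G lam * (((1 / 2 : ℝ) • (↑w⁻¹ : C(Icc p₀ 0, ℝ))) * y) +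
        bE G lam * (((1 / 2 : ℝ) • (↑w⁻¹ : C(Icc p₀ 0, ℝ))) * y) = y
      rw [← hw, smul_mul_assoc, mul_smul_comm, ← mul_assoc, Units.mul_inv, one_mul, ← add_smul]
      norm_num
  have hev := hcd.eventually_apply_eq_iff_implicitFunction (by simp) hinv
  have hcont : Filter.Tendsto (fun l => (l, bE G l)) (nhds lam) (nhds (lam, bE G lam)) :=
    (continuous_id.prodMk (continuous_bE G)).tendsto lam
  have hposev : ∀ᶠ l in nhds lam, ∀ x, 0 < l - 2 * G x := by
    have hc : ∀ᶠ l in nhds lam, IsUnit (bE G l) :=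
      (continuous_bE G).continuousAt.eventually (Units.isOpen.mem_nhds (isUnit_bE G h))
    filter_upwards [hc] with l hl x
    rw [ContinuousMap.isUnit_iff_forall_ne_zero] at hl
    by_contra hx
    exact hl x (Real.sqrt_eq_zero_of_nonpos (not_lt.1 hx))
  have heq : hcd.implicitFunction (by simp) hinv =ᶠ[nhds lam] bE G := by
    filter_upwards [hcont.eventually hev, hposev] with l hl hl2
    exact hl.1 (by rw [hzero l hl2, hzero lam h])
  exact (hcd.contDiffAt_implicitFunction (by simp) hinv).analyticAt.congr heq

theorem analyticAt_rinv {V A : Type*} [NormedAddCommGroup V] [NormedSpace ℝ V]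
    [NormedRing A] [NormedAlgebra ℝ A] [HasSummableGeomSeries A]
    {f : V → A} {v : V} (hf : AnalyticAt ℝ f v) (hu : IsUnit (f v)) :
    AnalyticAt ℝ (fun v => Ring.inverse (f v)) v := by
  obtain ⟨u, hu⟩ := hu
  have h1 := analyticAt_inverse (𝕜 := ℝ) u
  rw [hu] at h1
  exact h1.comp hf

theorem analyticAt_clmApply {V E : Type*} [NormedAddCommGroup V] [NormedSpace ℝ V]
    [NormedAddCommGroup E] [NormedSpace ℝ E]
    {f : V → E →L[ℝ] E} {g : V → E} {v : V} (hf : AnalyticAt ℝ f v) (hg : AnalyticAt ℝ g v) :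
    AnalyticAt ℝ (fun v => f v (g v)) v :=
  AnalyticAt.comp (g := fun q : (E →L[ℝ] E) × E => q.1 q.2) (f := fun v => (f v, g v))
    ((ContinuousLinearMap.id ℝ (E →L[ℝ] E)).analyticAt_bilinear (f v, g v)) (hf.prod hg)

theorem analyticAt_clmMul {V E : Type*} [NormedAddCommGroup V] [NormedSpace ℝ V]
    [NormedAddCommGroup E] [NormedSpace ℝ E]
    {f g : V → E →L[ℝ] E} {v : V} (hf : AnalyticAt ℝ f v) (hg : AnalyticAt ℝ g v) :
    AnalyticAt ℝ (fun v => f v * g v) v :=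
  AnalyticAt.comp (g := fun q : (E →L[ℝ] E) × (E →L[ℝ] E) => q.1 * q.2)
    (f := fun v => (f v, g v))
    ((ContinuousLinearMap.compL ℝ E E E).analyticAt_bilinear (f v, g v)) (hf.prod hg)

/-- The inverse cube of `b`. -/
noncomputable def rE (G : C(Icc p₀ 0, ℝ)) (lam : ℝ) : C(Icc p₀ 0, ℝ) := Ring.inverse (bE G lam ^ 3)

theorem rE_mul (G : C(Icc p₀ 0, ℝ)) {lam : ℝ} (h : ∀ x, 0 < lam - 2 * G x) :
    rE G lam * bE G lam ^ 3 = 1 := Ring.inverse_mul_cancel _ ((isUnit_bE G h).pow 3)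

theorem analyticAt_rE (G : C(Icc p₀ 0, ℝ)) {lam : ℝ} (h : ∀ x, 0 < lam - 2 * G x) :
    AnalyticAt ℝ (rE G) lam := by
  exact analyticAt_rinv ((analyticAt_bE G h).fun_pow 3) ((isUnit_bE G h).pow 3)

/-- The constant `b(p₀)^3`. -/
noncomputable def cE (hp : p₀ ≤ 0) (G : C(Icc p₀ 0, ℝ)) (lam : ℝ) : ℝ :=
  (bE G lam ⟨p₀, left_mem_Icc.2 hp⟩) ^ 3

theorem analyticAt_eval (x : Icc p₀ 0) {V : Type*} [NormedAddCommGroup V] [NormedSpace ℝ V]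
    {f : V → C(Icc p₀ 0, ℝ)} {v : V} (hf : AnalyticAt ℝ f v) :
    AnalyticAt ℝ (fun v => f v x) v :=
  ((ContinuousMap.evalCLM ℝ x : C(Icc p₀ 0, ℝ) →L[ℝ] ℝ).analyticAt _).comp hf

theorem analyticAt_cE (hp : p₀ ≤ 0) (G : C(Icc p₀ 0, ℝ)) {lam : ℝ} (h : ∀ x, 0 < lam - 2 * G x) :
    AnalyticAt ℝ (cE hp G) lam := (analyticAt_eval _ (analyticAt_bE G h)).pow 3

theorem analyticAt_mulL {V A : Type*} [NormedAddCommGroup V] [NormedSpace ℝ V]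
    [NormedRing A] [NormedAlgebra ℝ A] {f : V → A} {v : V} (hf : AnalyticAt ℝ f v) :
    AnalyticAt ℝ (fun v => ContinuousLinearMap.mul ℝ A (f v)) v :=
  AnalyticAt.comp (g := fun a => ContinuousLinearMap.mul ℝ A a)
    ((ContinuousLinearMap.mul ℝ A).analyticAt (f v)) hf

theorem analyticAt_volW (hp : p₀ ≤ 0) {V : Type*} [NormedAddCommGroup V] [NormedSpace ℝ V]
    {f : V → C(Icc p₀ 0, ℝ)} {v : V} (hf : AnalyticAt ℝ f v) :
    AnalyticAt ℝ (fun v => volW hp (f v)) v :=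
  analyticAt_clmMul (f := fun _ => volJ hp)
    (g := fun v => ContinuousLinearMap.mul ℝ C(Icc p₀ 0, ℝ) (f v)) analyticAt_const
    (analyticAt_mulL hf)

/-- The solution of the initial value problem, as an element of `C([p₀,0])`. -/
noncomputable def zE (hp : p₀ ≤ 0) (G : C(Icc p₀ 0, ℝ)) (q : ℝ × ℝ) : C(Icc p₀ 0, ℝ) :=
  (Ring.inverse (1 - volW hp (rE G q.1) * volW hp (q.2 • bE G q.1)))
    (cE hp G q.1 • volJ hp (rE G q.1))

theorem analyticAt_zE (hp : p₀ ≤ 0) (G : C(Icc p₀ 0, ℝ)) {q : ℝ × ℝ}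
    (h : ∀ x, 0 < q.1 - 2 * G x) : AnalyticAt ℝ (zE hp G) q := by
  have hfst : AnalyticAt ℝ (fun q : ℝ × ℝ => q.1) q := analyticAt_fst
  have hsnd : AnalyticAt ℝ (fun q : ℝ × ℝ => q.2) q := analyticAt_snd
  have hr : AnalyticAt ℝ (fun q : ℝ × ℝ => rE G q.1) q := (analyticAt_rE G h).comp hfst
  have hb : AnalyticAt ℝ (fun q : ℝ × ℝ => bE G q.1) q := (analyticAt_bE G h).comp hfst
  have hc : AnalyticAt ℝ (fun q : ℝ × ℝ => cE hp G q.1) q := (analyticAt_cE hp G h).comp hfst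
  have hop : AnalyticAt ℝ
      (fun q : ℝ × ℝ => 1 - volW hp (rE G q.1) * volW hp (q.2 • bE G q.1)) q :=
    analyticAt_const.fun_sub
      (analyticAt_clmMul (analyticAt_volW hp hr) (analyticAt_volW hp (hsnd.fun_smul hb)))
  have hinv : AnalyticAt ℝ
      (fun q : ℝ × ℝ => Ring.inverse (1 - volW hp (rE G q.1) * volW hp (q.2 • bE G q.1))) q :=
    analyticAt_rinv (A := C(Icc p₀ 0, ℝ) →L[ℝ] C(Icc p₀ 0, ℝ)) hop (isUnit_one_sub_volW hp (rE G q.1) (q.2 • bE G q.1))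
  have hvec : AnalyticAt ℝ (fun q : ℝ × ℝ => cE hp G q.1 • volJ hp (rE G q.1)) q :=
    hc.smul (((volJ hp).analyticAt _).comp hr)
  exact analyticAt_clmApply hinv hvec

/-- The boundary flux at the surface. -/
noncomputable def yE (hp : p₀ ≤ 0) (G : C(Icc p₀ 0, ℝ)) (q : ℝ × ℝ) : ℝ :=
  cE hp G q.1 + volW hp (q.2 • bE G q.1) (zE hp G q) ⟨0, right_mem_Icc.2 hp⟩

theorem analyticAt_yE (hp : p₀ ≤ 0) (G : C(Icc p₀ 0, ℝ)) {q : ℝ × ℝ}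
    (h : ∀ x, 0 < q.1 - 2 * G x) : AnalyticAt ℝ (yE hp G) q := by
  have hfst : AnalyticAt ℝ (fun q : ℝ × ℝ => q.1) q := analyticAt_fst
  have hsnd : AnalyticAt ℝ (fun q : ℝ × ℝ => q.2) q := analyticAt_snd
  have hb : AnalyticAt ℝ (fun q : ℝ × ℝ => bE G q.1) q := (analyticAt_bE G h).comp hfst
  have hc : AnalyticAt ℝ (fun q : ℝ × ℝ => cE hp G q.1) q := (analyticAt_cE hp G h).comp hfst
  exact hc.add (analyticAt_eval _ (analyticAt_clmApply (analyticAt_volW hp (hsnd.fun_smul hb))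
    (analyticAt_zE hp G h)))

/-- Identification of the given solution with the one from the operator equation. -/
theorem SLSol.identify (hp₀ : p₀ < 0) (G : C(Icc p₀ 0, ℝ)) {Γ : ℝ → ℝ}
    (hG : ∀ t (ht : t ∈ Icc p₀ 0), G ⟨t, ht⟩ = Γ t) {lam μ : ℝ}
    (hpos : ∀ x, 0 < lam - 2 * G x) (hΓ : ContinuousOn Γ (Icc p₀ 0)) {z z' : ℝ → ℝ}
    (h : SLSol p₀ (fun s => Real.sqrt (lam - 2 * Γ s) ^ 3) (fun s => Real.sqrt (lam - 2 * Γ s))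
      μ z z') :
    z 0 = zE hp₀.le G (lam, μ) ⟨0, right_mem_Icc.2 hp₀.le⟩ ∧
      Real.sqrt (lam - 2 * Γ 0) ^ 3 * z' 0 = yE hp₀.le G (lam, μ) := by
  have hzC := h.test.cont
  have hzc := h.hzc
  have hp := hp₀.le
  let Z : C(Icc p₀ 0, ℝ) := ⟨fun x => z x, hzC.domRestrict⟩
  have hbv : ∀ t (ht : t ∈ Icc p₀ 0), bE G lam ⟨t, ht⟩ = Real.sqrt (lam - 2 * Γ t) := by
    intro t ht
    rw [bE_apply, hG]
  have hcv : cE hp G lam = Real.sqrt (lam - 2 * Γ p₀) ^ 3 := by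
    rw [cE, hbv]
  have hY : ∀ x : Icc p₀ 0, cE hp G lam + volW hp (μ • bE G lam) Z x =
      Real.sqrt (lam - 2 * Γ x) ^ 3 * z' x := by
    intro x
    have hsub : Icc p₀ (x : ℝ) ⊆ Icc p₀ 0 := Icc_subset_Icc_right x.2.2
    rw [volW_apply, volJ_apply hp _ (fun t => μ * Real.sqrt (lam - 2 * Γ t) * z t)]
    · rw [intervalIntegral.integral_eq_sub_of_hasDerivAt_of_le x.2.1
        (f := fun t => Real.sqrt (lam - 2 * Γ t) ^ 3 * z' t)]
      · rw [h.hz1, hcv]; ring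
      · apply ContinuousOn.mono _ hsub
        fun_prop
      · intro t ht
        exact h.hode t ⟨ht.1, ht.2.trans_le x.2.2⟩
      · apply ContinuousOn.intervalIntegrable
        rw [uIcc_of_le x.2.1]
        apply ContinuousOn.mono _ hsub
        fun_prop
    · intro t ht
      change μ * bE G lam ⟨t, ht⟩ * z t = _
      rw [hbv]
  have hZ : Z = cE hp G lam • volJ hp (rE G lam) +
      volW hp (rE G lam) (volW hp (μ • bE G lam) Z) := by
    have : cE hp G lam • volJ hp (rE G lam) + volW hp (rE G lam) (volW hp (μ • bE G lam) Z) =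
        volJ hp (rE G lam * (cE hp G lam • 1 + volW hp (μ • bE G lam) Z)) := by
      rw [volW_apply hp (rE G lam), mul_add, map_add, mul_smul_comm, mul_one, map_smul]
    rw [this]
    ext x
    have hsub : Icc p₀ (x : ℝ) ⊆ Icc p₀ 0 := Icc_subset_Icc_right x.2.2
    rw [volJ_apply hp _ z']
    · rw [intervalIntegral.integral_eq_sub_of_hasDerivAt_of_le x.2.1 (f := z)]
      · rw [h.hz0, sub_zero]; rfl
      · exact hzC.mono hsub
      · intro t ht
        have ht' : t ∈ Ioo p₀ 0 := ⟨ht.1, ht.2.trans_le x.2.2⟩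
        exact (h.hz t (Ioo_subset_Icc_self ht')).hasDerivAt (Icc_mem_nhds ht'.1 ht'.2)
      · apply ContinuousOn.intervalIntegrable
        rw [uIcc_of_le x.2.1]
        exact hzc.mono hsub
    · intro t ht
      have h1 := hY ⟨t, ht⟩
      have h2 := congrArg (fun F : C(Icc p₀ 0, ℝ) => F ⟨t, ht⟩) (rE_mul G hpos)
      simp only [ContinuousMap.mul_apply, ContinuousMap.pow_apply, ContinuousMap.one_apply,
        hbv] at h2
      simp only [ContinuousMap.mul_apply, ContinuousMap.add_apply, ContinuousMap.smul_apply,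
        ContinuousMap.one_apply, smul_eq_mul, mul_one]
      rw [h1]
      simp only
      linear_combination z' t * h2
  have hZE : Z = zE hp G (lam, μ) := by
    have hu := isUnit_one_sub_volW hp (rE G lam) (μ • bE G lam)
    have h1 : (1 - volW hp (rE G lam) * volW hp (μ • bE G lam)) Z =
        cE hp G lam • volJ hp (rE G lam) := by
      change Z - volW hp (rE G lam) (volW hp (μ • bE G lam) Z) = _
      rw [sub_eq_iff_eq_add]
      exact hZ
    change Z = (Ring.inverse (1 - volW hp (rE G lam) * volW hp (μ • bE G lam)))
      (cE hp G lam • volJ hp (rE G lam))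
    rw [← h1]
    change Z = (Ring.inverse (1 - volW hp (rE G lam) * volW hp (μ • bE G lam)) *
      (1 - volW hp (rE G lam) * volW hp (μ • bE G lam))) Z
    rw [Ring.inverse_mul_cancel _ hu]
    rfl
  constructor
  · rw [← hZE]; rfl
  · have := hY ⟨0, right_mem_Icc.2 hp⟩
    rw [hZE] at this
    exact this.symm

end Analytic

theorem zE_zero_mu {p₀ : ℝ} (hp : p₀ ≤ 0) (G : C(Icc p₀ 0, ℝ)) (lam : ℝ) :
    zE hp G (lam, 0) = cE hp G lam • volJ hp (rE G lam) := by
  have h0 : volW hp (0 : C(Icc p₀ 0, ℝ)) = 0 := by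
    ext f x
    simp [volW_apply]
  simp [zE, h0]

theorem yE_zero_mu {p₀ : ℝ} (hp : p₀ ≤ 0) (G : C(Icc p₀ 0, ℝ)) (lam : ℝ) :
    yE hp G (lam, 0) = cE hp G lam := by
  have h0 : volW hp (0 : C(Icc p₀ 0, ℝ)) = 0 := by
    ext f x
    simp [volW_apply]
  simp [yE, h0]

/-- A scalar analytic implicit function theorem. -/
theorem analytic_implicit {H : ℝ × ℝ → ℝ} {l m s : ℝ} (hH : AnalyticAt ℝ H (l, m))
    (h0 : H (l, m) = 0) (hs : s < 0) (hle : ∀ᶠ μ in nhds m, H (l, μ) ≤ (μ - m) * s) :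
    ∃ φ : ℝ → ℝ, AnalyticAt ℝ φ l ∧ φ l = m ∧ ∀ᶠ x in nhds l, H (x, φ x) = 0 := by
  have hcd : ContDiffAt ℝ ⊤ H (l, m) := hH.contDiffAt
  have hdiff : DifferentiableAt ℝ H (l, m) := hH.differentiableAt
  have hcomp := hdiff.hasFDerivAt.comp m (hasFDerivAt_prodMk_right l m)
  set D := fderiv ℝ H (l, m) ∘L .inr ℝ ℝ ℝ with hD
  have hda : HasDerivAt (fun μ => H (l, μ)) (D 1) m := hcomp.hasDerivAt
  have hmax : IsLocalMax (fun μ => H (l, μ) - (μ - m) * s) m := by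
    filter_upwards [hle] with μ hμ
    rw [h0]
    linarith
  have hder : HasDerivAt (fun μ => H (l, μ) - (μ - m) * s) (D 1 - 1 * s) m :=
    hda.sub (((hasDerivAt_id m).sub_const m).mul_const s)
  have hD1 : D 1 ≠ 0 := by
    have := hmax.hasDerivAt_eq_zero hder
    intro h
    rw [h] at this
    linarith
  have hinv : D.IsInvertible := by
    refine ⟨ContinuousLinearEquiv.unitsEquivAut ℝ (Units.mk0 (D 1) hD1), ?_⟩
    ext
    simp
  refine ⟨hcd.implicitFunction (by simp) hinv,
    (hcd.contDiffAt_implicitFunction (by simp) hinv).analyticAt,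
    hcd.implicitFunction_apply_self (by simp) hinv, ?_⟩
  have := hcd.eventually_apply_implicitFunction (by simp) hinv
  rw [h0] at this
  exact this

/-- There is a continuous, strictly increasing, real-analytic function
`m : (λ₀,∞) → (0,∞)` such that for all `λ > λ₀` and `μ ≥ 0` one has `Ξ(λ,μ) = 0 ↔ μ = m(λ)`,
where `Ξ(λ,μ) := λ^{3/2} z′(0;λ,μ) − (g+σμ) z(0;λ,μ)` and `z(·;λ,μ)` solves the
Sturm–Liouville initial value problem with `b(p;λ) = √(λ − 2Γ(p))`. -/
theorem stmt_13 (p₀ g σ lam₀ : ℝ) (hp₀ : p₀ < 0) (hg : 0 < g) (hσ : 0 < σ)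
    (Γ : ℝ → ℝ) (K : NNReal) (hΓ : LipschitzOnWith K Γ (Set.Icc p₀ 0)) (hΓ0 : Γ 0 = 0)
    (hlam₀ : 2 * sSup (Γ '' Set.Icc p₀ 0) < lam₀)
    (hlam₀' : g * ∫ p in p₀..0, (Real.sqrt (lam₀ - 2 * Γ p) ^ 3)⁻¹ = 1)
    (z z' : ℝ → ℝ → ℝ → ℝ)
    (hz : ∀ lam : ℝ, 2 * sSup (Γ '' Set.Icc p₀ 0) < lam → ∀ μ : ℝ, 0 ≤ μ →
      ∀ p ∈ Set.Icc p₀ 0, HasDerivWithinAt (z lam μ) (z' lam μ p) (Set.Icc p₀ 0) p)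
    (hzc : ∀ lam : ℝ, 2 * sSup (Γ '' Set.Icc p₀ 0) < lam → ∀ μ : ℝ, 0 ≤ μ →
      ContinuousOn (z' lam μ) (Set.Icc p₀ 0))
    (hz0 : ∀ lam : ℝ, 2 * sSup (Γ '' Set.Icc p₀ 0) < lam → ∀ μ : ℝ, 0 ≤ μ →
      z lam μ p₀ = 0)
    (hz1 : ∀ lam : ℝ, 2 * sSup (Γ '' Set.Icc p₀ 0) < lam → ∀ μ : ℝ, 0 ≤ μ →
      z' lam μ p₀ = 1)
    (hzode : ∀ lam : ℝ, 2 * sSup (Γ '' Set.Icc p₀ 0) < lam → ∀ μ : ℝ, 0 ≤ μ →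
      ∀ p ∈ Set.Ioo p₀ 0,
        HasDerivAt (fun s => Real.sqrt (lam - 2 * Γ s) ^ 3 * z' lam μ s)
          (μ * Real.sqrt (lam - 2 * Γ p) * z lam μ p) p) :
    ∃ m : ℝ → ℝ,
      ContinuousOn m (Set.Ioi lam₀) ∧
      StrictMonoOn m (Set.Ioi lam₀) ∧
      AnalyticOnNhd ℝ m (Set.Ioi lam₀) ∧
      (∀ lam ∈ Set.Ioi lam₀, 0 < m lam) ∧
      (∀ lam ∈ Set.Ioi lam₀, ∀ μ : ℝ, 0 ≤ μ →
        (Real.sqrt lam ^ 3 * z' lam μ 0 - (g + σ * μ) * z lam μ 0 = 0 ↔ μ = m lam)) := by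
  have hp := hp₀.le
  have hΓc := hΓ.continuousOn
  set Γm := sSup (Γ '' Set.Icc p₀ 0) with hΓm
  have hbdd : BddAbove (Γ '' Icc p₀ 0) := (isCompact_Icc.image_of_continuousOn hΓc).bddAbove
  have hΓle : ∀ p ∈ Icc p₀ 0, Γ p ≤ Γm := fun p hp => le_csSup hbdd (mem_image_of_mem Γ hp)
  let G : C(Icc p₀ 0, ℝ) := ⟨fun x => Γ x, hΓc.domRestrict⟩
  have hG : ∀ t (ht : t ∈ Icc p₀ 0), G ⟨t, ht⟩ = Γ t := fun t ht => rfl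
  have hposG : ∀ l, 2 * Γm < l → ∀ x, 0 < l - 2 * G x := by
    intro l hl x
    have := hΓle x x.2
    change 0 < l - 2 * Γ x
    linarith
  have hβ : ∀ l : ℝ, ContinuousOn (fun s => Real.sqrt (l - 2 * Γ s)) (Icc p₀ 0) := by
    intro l; fun_prop
  have hρ : ∀ l : ℝ, ContinuousOn (fun s => Real.sqrt (l - 2 * Γ s) ^ 3) (Icc p₀ 0) := by
    intro l; fun_prop
  have hβ0 : ∀ l, 2 * Γm < l → ∀ p ∈ Icc p₀ 0, 0 < Real.sqrt (l - 2 * Γ p) := by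
    intro l hl p hp
    have := hΓle p hp
    exact Real.sqrt_pos.2 (by linarith)
  have hρ0 : ∀ l, 2 * Γm < l → ∀ p ∈ Icc p₀ 0, 0 < Real.sqrt (l - 2 * Γ p) ^ 3 :=
    fun l hl p hp => pow_pos (hβ0 l hl p hp) 3
  have sol : ∀ l, 2 * Γm < l → ∀ μ, 0 ≤ μ → SLSol p₀ (fun s => Real.sqrt (l - 2 * Γ s) ^ 3)
      (fun s => Real.sqrt (l - 2 * Γ s)) μ (z l μ) (z' l μ) := fun l hl μ hμ =>
    ⟨hz l hl μ hμ, hzc l hl μ hμ, hz0 l hl μ hμ, hz1 l hl μ hμ, hzode l hl μ hμ⟩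
  have hne : ∀ l, 2 * Γm < l → ∀ μ, 0 ≤ μ → z l μ 0 ≠ 0 := fun l hl μ hμ =>
    (sol l hl μ hμ).z0_ne hp₀ (hρ l) (hβ l) (hρ0 l hl) (hβ0 l hl) hμ
  -- the reduced dispersion function
  let H : ℝ × ℝ → ℝ := fun q =>
    yE hp G q / zE hp G q ⟨0, right_mem_Icc.2 hp⟩ - g - σ * q.2
  have hHeq : ∀ l, 2 * Γm < l → ∀ μ, 0 ≤ μ →
      H (l, μ) = Real.sqrt (l - 2 * Γ 0) ^ 3 * z' l μ 0 / z l μ 0 - g - σ * μ := by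
    intro l hl μ hμ
    obtain ⟨h1, h2⟩ := (sol l hl μ hμ).identify hp₀ G hG (hposG l hl) hΓc
    simp only [H]
    rw [h1, h2]
  have hHan : ∀ l, 2 * Γm < l → ∀ μ, 0 ≤ μ → AnalyticAt ℝ H (l, μ) := by
    intro l hl μ hμ
    obtain ⟨h1, h2⟩ := (sol l hl μ hμ).identify hp₀ G hG (hposG l hl) hΓc
    have hy : AnalyticAt ℝ (yE hp G) (l, μ) := analyticAt_yE hp G (hposG l hl)
    have hzE : AnalyticAt ℝ (zE hp G) (l, μ) := analyticAt_zE hp G (hposG l hl)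
    have hsnd : AnalyticAt ℝ (fun q : ℝ × ℝ => q.2) (l, μ) := analyticAt_snd
    refine AnalyticAt.fun_sub (AnalyticAt.fun_sub (hy.fun_div (analyticAt_eval _ hzE) ?_)
      analyticAt_const) (analyticAt_const.fun_mul hsnd)
    rw [← h1]
    exact hne l hl μ hμ
  have hXi : ∀ l, 2 * Γm < l → ∀ μ, 0 ≤ μ →
      (Real.sqrt l ^ 3 * z' l μ 0 - (g + σ * μ) * z l μ 0 = 0 ↔ H (l, μ) = 0) := by
    intro l hl μ hμ
    have h0 := hne l hl μ hμ
    rw [hHeq l hl μ hμ, hΓ0, mul_zero, sub_zero]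
    have : Real.sqrt l ^ 3 * z' l μ 0 / z l μ 0 - g - σ * μ =
        (Real.sqrt l ^ 3 * z' l μ 0 - (g + σ * μ) * z l μ 0) / z l μ 0 := by
      field_simp
      ring
    rw [this, div_eq_zero_iff]
    simp [h0]
  have hmono : ∀ l₁ l₂, 2 * Γm < l₁ → l₁ < l₂ → ∀ μ, 0 ≤ μ → H (l₁, μ) < H (l₂, μ) := by
    intro l₁ l₂ h1 h12 μ hμ
    have h2 := h1.trans h12
    rw [hHeq l₁ h1 μ hμ, hHeq l₂ h2 μ hμ]
    have hl : ∀ p ∈ Icc p₀ 0, Real.sqrt (l₁ - 2 * Γ p) < Real.sqrt (l₂ - 2 * Γ p) := by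
      intro p hp
      have := hΓle p hp
      exact Real.sqrt_lt_sqrt (by linarith) (by linarith)
    have := (sol l₁ h1 μ hμ).mono hp₀ (hρ l₁) (hβ l₁) (hρ l₂) (hβ l₂) (hρ0 l₁ h1) (hβ0 l₁ h1)
      (fun p hp => pow_lt_pow_left₀ (hl p hp) (Real.sqrt_nonneg _) (by norm_num)) hl hμ
      (sol l₂ h2 μ hμ)
    linarith
  have hbase : H (lam₀, 0) = 0 := by
    have hr : ∀ t (ht : t ∈ Icc p₀ 0),
        rE G lam₀ ⟨t, ht⟩ = (Real.sqrt (lam₀ - 2 * Γ t) ^ 3)⁻¹ := by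
      intro t ht
      have h2 := congrArg (fun F : C(Icc p₀ 0, ℝ) => F ⟨t, ht⟩) (rE_mul G (hposG lam₀ hlam₀))
      simp only [ContinuousMap.mul_apply, ContinuousMap.pow_apply, ContinuousMap.one_apply,
        bE_apply, hG] at h2
      exact eq_inv_of_mul_eq_one_left h2
    have hc : cE hp G lam₀ ≠ 0 := by
      have := hρ0 lam₀ hlam₀ p₀ (left_mem_Icc.2 hp)
      exact this.ne'
    simp only [H, zE_zero_mu, yE_zero_mu, ContinuousMap.smul_apply, smul_eq_mul, mul_zero, sub_zero]
    rw [volJ_apply hp _ _ hr]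
    simp only
    have hI : (∫ p in p₀..0, (Real.sqrt (lam₀ - 2 * Γ p) ^ 3)⁻¹) ≠ 0 := by
      intro h
      rw [h] at hlam₀'
      simp at hlam₀'
    rw [sub_eq_zero, div_eq_iff (mul_ne_zero hc hI)]
    linear_combination (-cE hp G lam₀) * hlam₀'
  have hlt : ∀ l, lam₀ < l → 2 * Γm < l := fun l hl => hlam₀.trans hl
  have hpos0 : ∀ l, lam₀ < l → 0 < H (l, 0) := by
    intro l hl
    have h1 := hmono lam₀ l hlam₀ hl 0 le_rfl
    rwa [hbase] at h1
  -- concavity at a zero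
  have hsup : ∀ l, lam₀ < l → ∀ m, 0 ≤ m → H (l, m) = 0 →
      0 < m ∧ ∃ s, s < 0 ∧ ∀ μ, 0 ≤ μ → H (l, μ) ≤ (μ - m) * s := by
    intro l hl m hm h0
    have hl' := hlt l hl
    obtain ⟨S, hS⟩ := (sol l hl' m hm).supergrad hp₀ (hρ l) (hβ l) (hρ0 l hl') (hβ0 l hl') hm
    have hb : ∀ μ, 0 ≤ μ → H (l, μ) ≤ (μ - m) * (S - σ) := by
      intro μ hμ
      have h1 := hS μ _ _ hμ (sol l hl' μ hμ)
      have h2 := hHeq l hl' m hm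
      rw [hHeq l hl' μ hμ]
      linarith
    have hm0 : 0 < m := by
      rcases hm.eq_or_lt with h | h
      · have := hpos0 l hl
        rw [← h] at h0
        linarith
      · exact h
    refine ⟨hm0, S - σ, ?_, hb⟩
    have h1 := hb 0 le_rfl
    have h2 := hpos0 l hl
    by_contra hcon
    have := mul_nonneg hm (not_lt.1 hcon)
    linarith
  have hex : ∀ l, lam₀ < l → ∃ m, 0 ≤ m ∧ H (l, m) = 0 := by
    intro l hl
    have hl' := hlt l hl
    obtain ⟨C, S, hSσ, hCS⟩ := SLSol.small_slope hp₀ (hρ l) (hβ l) (hρ0 l hl') (hβ0 l hl') hσ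
    set M := |C| / (σ - S) with hM
    have hσS : 0 < σ - S := by linarith
    have hM0 : 0 ≤ M := by positivity
    have hneg : H (l, M) ≤ 0 := by
      rw [hHeq l hl' M hM0]
      have h1 := hCS M _ _ hM0 (sol l hl' M hM0)
      have h2 : M * (σ - S) = |C| := div_mul_cancel₀ _ hσS.ne'
      have h3 := le_abs_self C
      nlinarith
    have hcont : ContinuousOn (fun μ => H (l, μ)) (Icc 0 M) := by
      intro μ hμ
      have h1 := (hHan l hl' μ hμ.1).continuousAt
      exact (ContinuousAt.comp (f := fun μ : ℝ => (l, μ)) (g := H) h1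
        (by fun_prop)).continuousWithinAt
    obtain ⟨m, hm, hm'⟩ := intermediate_value_Icc' hM0 hcont ⟨hneg, (hpos0 l hl).le⟩
    exact ⟨m, hm.1, hm'⟩
  choose! m hm0 hmH using hex
  have huniq : ∀ l, lam₀ < l → ∀ μ, 0 ≤ μ → H (l, μ) = 0 → μ = m l := by
    intro l hl μ hμ h0
    obtain ⟨_, s, hs, h1⟩ := hsup l hl μ hμ h0
    obtain ⟨_, t, ht, h2⟩ := hsup l hl (m l) (hm0 l hl) (hmH l hl)
    have h3 := h1 (m l) (hm0 l hl)
    have h4 := h2 μ hμ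
    rw [hmH l hl] at h3
    rw [h0] at h4
    apply le_antisymm
    · nlinarith
    · nlinarith
  have hmpos : ∀ l, lam₀ < l → 0 < m l := fun l hl =>
    (hsup l hl (m l) (hm0 l hl) (hmH l hl)).1
  have hana : AnalyticOnNhd ℝ m (Set.Ioi lam₀) := by
    intro l hl
    have hl : lam₀ < l := hl
    obtain ⟨hpos, s, hs, h1⟩ := hsup l hl (m l) (hm0 l hl) (hmH l hl)
    obtain ⟨φ, hφ, hφl, hφ0⟩ := analytic_implicit (hHan l (hlt l hl) (m l) (hm0 l hl)) (hmH l hl) hs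
      (by filter_upwards [lt_mem_nhds hpos] with μ hμ using h1 μ hμ.le)
    refine hφ.congr ?_
    have hφpos : ∀ᶠ x in nhds l, 0 < φ x :=
      hφ.continuousAt.eventually (lt_mem_nhds (by rw [hφl]; exact hpos))
    filter_upwards [hφ0, hφpos, lt_mem_nhds hl] with x hx0 hxp hxl
    exact huniq x hxl (φ x) hxp.le hx0
  refine ⟨m, hana.continuousOn, ?_, hana, hmpos, ?_⟩
  · intro l₁ h1 l₂ h2 h12
    have h1 : lam₀ < l₁ := h1
    have h2 : lam₀ < l₂ := h2
    obtain ⟨_, t, ht, h3⟩ := hsup l₂ h2 (m l₂) (hm0 l₂ h2) (hmH l₂ h2)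
    have h4 := hmono l₁ l₂ (hlt l₁ h1) h12 (m l₁) (hm0 l₁ h1)
    have h5 := h3 (m l₁) (hm0 l₁ h1)
    rw [hmH l₁ h1] at h4
    nlinarith
  · intro l hl μ hμ
    have hl : lam₀ < l := hl
    rw [hXi l (hlt l hl) μ hμ]
    exact ⟨huniq l hl μ hμ, fun h => h ▸ hmH l hl⟩
end

section
/- For every K > 0 there exists Λ > λ₀ such that whenever λ > Λ and μ ≥ 0 satisfy Ξ(λ, μ) = 0, then μ > K·λ. -/
open Set

/-- For every `K > 0` there exists `Λ > λ₀` such that whenever `λ > Λ` and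
`μ ≥ 0` satisfy `Ξ(λ,μ) = 0`, then `μ > K·λ`, where
`Ξ(λ,μ) := λ^{3/2} z′(0;λ,μ) − (g+σμ) z(0;λ,μ)` and `z(·;λ,μ)` solves the Sturm–Liouville
initial value problem with `b(p;λ) = √(λ − 2Γ(p))`. -/
theorem stmt_14 (p₀ g σ lam₀ : ℝ) (hp₀ : p₀ < 0) (hg : 0 < g) (hσ : 0 < σ)
    (Γ : ℝ → ℝ) (K : NNReal) (hΓ : LipschitzOnWith K Γ (Set.Icc p₀ 0)) (hΓ0 : Γ 0 = 0)
    (hlam₀ : 2 * sSup (Γ '' Set.Icc p₀ 0) < lam₀)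
    (hlam₀' : g * ∫ p in p₀..0, (Real.sqrt (lam₀ - 2 * Γ p) ^ 3)⁻¹ = 1)
    (z z' : ℝ → ℝ → ℝ → ℝ)
    (hz : ∀ lam : ℝ, 2 * sSup (Γ '' Set.Icc p₀ 0) < lam → ∀ μ : ℝ, 0 ≤ μ →
      ∀ p ∈ Set.Icc p₀ 0, HasDerivWithinAt (z lam μ) (z' lam μ p) (Set.Icc p₀ 0) p)
    (hzc : ∀ lam : ℝ, 2 * sSup (Γ '' Set.Icc p₀ 0) < lam → ∀ μ : ℝ, 0 ≤ μ →
      ContinuousOn (z' lam μ) (Set.Icc p₀ 0))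
    (hz0 : ∀ lam : ℝ, 2 * sSup (Γ '' Set.Icc p₀ 0) < lam → ∀ μ : ℝ, 0 ≤ μ →
      z lam μ p₀ = 0)
    (hz1 : ∀ lam : ℝ, 2 * sSup (Γ '' Set.Icc p₀ 0) < lam → ∀ μ : ℝ, 0 ≤ μ →
      z' lam μ p₀ = 1)
    (hzode : ∀ lam : ℝ, 2 * sSup (Γ '' Set.Icc p₀ 0) < lam → ∀ μ : ℝ, 0 ≤ μ →
      ∀ p ∈ Set.Ioo p₀ 0,
        HasDerivAt (fun s => Real.sqrt (lam - 2 * Γ s) ^ 3 * z' lam μ s)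
          (μ * Real.sqrt (lam - 2 * Γ p) * z lam μ p) p) :
    ∀ C : ℝ, 0 < C → ∃ Λ : ℝ, lam₀ < Λ ∧
      ∀ lam : ℝ, Λ < lam → ∀ μ : ℝ, 0 ≤ μ →
        Real.sqrt lam ^ 3 * z' lam μ 0 - (g + σ * μ) * z lam μ 0 = 0 →
          C * lam < μ := by
  intro C hC
  set S := sSup (Γ '' Set.Icc p₀ 0) with hS
  have hΓc : ContinuousOn Γ (Set.Icc p₀ 0) := hΓ.continuousOn
  have hbdd : BddAbove (Γ '' Set.Icc p₀ 0) := (isCompact_Icc.image_of_continuousOn hΓc).bddAbove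
  have hle : ∀ p ∈ Set.Icc p₀ 0, Γ p ≤ S := fun p hp => le_csSup hbdd ⟨p, hp, rfl⟩
  have m0 : (0:ℝ) ∈ Set.Icc p₀ 0 := ⟨hp₀.le, le_refl _⟩
  have mp : p₀ ∈ Set.Icc p₀ 0 := ⟨le_refl _, hp₀.le⟩
  have hS0 : 0 ≤ S := hΓ0 ▸ hle 0 m0
  set D := (g + 2 * σ * C) * (-p₀) with hD
  have hDpos : 0 < D := by
    apply mul_pos <;> [positivity; linarith]
  refine ⟨|lam₀| + 4 * S + 2 * D ^ 2 + 2, ?_, ?_⟩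
  · nlinarith [le_abs_self lam₀, sq_nonneg D]
  intro lam hlam μ hμ hXi
  by_contra hcon
  push Not at hcon
  have habs := abs_nonneg lam₀
  have hlS : 2 * S < lam := by nlinarith [sq_nonneg D]
  have hl0 : 0 < lam := by linarith
  set s := Real.sqrt (lam / 2) with hs
  have hs2 : s ^ 2 = lam / 2 := Real.sq_sqrt (by linarith)
  have hs0 : 0 ≤ s := Real.sqrt_nonneg _
  have hs1 : 1 < s := by nlinarith [sq_nonneg D]
  have hsD : D < s := by nlinarith [sq_nonneg D]
  have hbs : ∀ p ∈ Set.Icc p₀ 0, s ≤ Real.sqrt (lam - 2 * Γ p) := fun p hp =>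
    Real.sqrt_le_sqrt (by nlinarith [hle p hp, sq_nonneg D])
  have hz := hz lam hlS μ hμ
  have hzc := hzc lam hlS μ hμ
  have hz0 := hz0 lam hlS μ hμ
  have hz1 := hz1 lam hlS μ hμ
  have hzode := hzode lam hlS μ hμ
  set y := z lam μ with hy
  set y' := z' lam μ with hy'
  set w : ℝ → ℝ := fun s => Real.sqrt (lam - 2 * Γ s) ^ 3 * y' s with hw
  have hwc : ContinuousOn w (Set.Icc p₀ 0) :=
    ((Real.continuous_sqrt.comp_continuousOn
      (continuousOn_const.sub (continuousOn_const.mul hΓc))).pow 3).mul hzc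
  have hyc : ContinuousOn y (Set.Icc p₀ 0) := fun p hp => (hz p hp).continuousWithinAt
  have hyd : ∀ p ∈ Set.Ioo p₀ 0, HasDerivAt y (y' p) p := fun p hp =>
    (hz p (Set.Ioo_subset_Icc_self hp)).hasDerivAt (Icc_mem_nhds hp.1 hp.2)
  have hm1 : MonotoneOn (fun p => w p * y p) (Set.Icc p₀ 0) := by
    apply monotoneOn_of_deriv_nonneg (convex_Icc _ _) (hwc.mul hyc)
    · rw [interior_Icc]
      exact fun p hp => ((hzode p hp).mul (hyd p hp)).differentiableAt.differentiableWithinAt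
    · rw [interior_Icc]
      intro p hp
      have h := ((hzode p hp).mul (hyd p hp)).deriv
      change deriv (w * y) p = _ at h
      rw [h]
      have hb := Real.sqrt_nonneg (lam - 2 * Γ p)
      have e1 : 0 ≤ μ * Real.sqrt (lam - 2 * Γ p) * (y p * y p) :=
        mul_nonneg (mul_nonneg hμ hb) (mul_self_nonneg _)
      have e2 : 0 ≤ Real.sqrt (lam - 2 * Γ p) ^ 3 * (y' p * y' p) :=
        mul_nonneg (pow_nonneg hb 3) (mul_self_nonneg _)
      have e3 : w p = Real.sqrt (lam - 2 * Γ p) ^ 3 * y' p := rfl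
      rw [e3]
      linarith
  have hwy : ∀ p ∈ Set.Icc p₀ 0, 0 ≤ w p * y p := by
    intro p hp
    have h := hm1 mp hp hp.1
    simpa [hz0] using h
  have hm2 : MonotoneOn (fun p => w p * w p) (Set.Icc p₀ 0) := by
    apply monotoneOn_of_deriv_nonneg (convex_Icc _ _) (hwc.mul hwc)
    · rw [interior_Icc]
      exact fun p hp => ((hzode p hp).mul (hzode p hp)).differentiableAt.differentiableWithinAt
    · rw [interior_Icc]
      intro p hp
      have h := ((hzode p hp).mul (hzode p hp)).deriv
      change deriv (w * w) p =
        (μ * Real.sqrt (lam - 2 * Γ p) * y p) * w p + w p * (μ * Real.sqrt (lam - 2 * Γ p) * y p) at h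
      rw [h]
      have e1 : 0 ≤ μ * Real.sqrt (lam - 2 * Γ p) * (w p * y p) :=
        mul_nonneg (mul_nonneg hμ (Real.sqrt_nonneg _)) (hwy p (Set.Ioo_subset_Icc_self hp))
      linarith
  have hwp : 0 < w p₀ := by
    have : 0 < Real.sqrt (lam - 2 * Γ p₀) := by linarith [hbs p₀ mp]
    simp only [hw, hz1]
    positivity
  have hw0 : 0 < |w 0| := by
    rw [abs_pos]
    intro h
    have h2 := hm2 mp m0 hp₀.le
    simp only [h] at h2
    nlinarith
  have hy'b : ∀ p ∈ Set.Icc p₀ 0, ‖y' p‖ ≤ |w 0| / s ^ 3 := by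
    intro p hp
    rw [Real.norm_eq_abs, le_div_iff₀ (by positivity)]
    have h1 : |w p| ≤ |w 0| := abs_le_iff_mul_self_le.mpr (hm2 hp m0 hp.2)
    have h2 : |w p| = Real.sqrt (lam - 2 * Γ p) ^ 3 * |y' p| := by
      simp only [hw]
      rw [abs_mul, abs_of_nonneg (pow_nonneg (Real.sqrt_nonneg _) 3)]
    have h3 : s ^ 3 ≤ Real.sqrt (lam - 2 * Γ p) ^ 3 := pow_le_pow_left₀ hs0 (hbs p hp) 3
    nlinarith [mul_le_mul_of_nonneg_right h3 (abs_nonneg (y' p))]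
  have hmv := (convex_Icc p₀ 0).norm_image_sub_le_of_norm_hasDerivWithin_le hz hy'b mp m0
  rw [hz0, sub_zero, zero_sub, Real.norm_eq_abs, Real.norm_eq_abs, abs_of_pos (by linarith : 0 < -p₀)] at hmv
  have hw0e : w 0 = (g + σ * μ) * y 0 := by
    have : w 0 = Real.sqrt lam ^ 3 * y' 0 := by simp [hw, hΓ0]
    linarith
  have hG : 0 < g + σ * μ := by positivity
  have hAe : |w 0| = (g + σ * μ) * |y 0| := by
    rw [hw0e, abs_mul, abs_of_pos hG]
  have h4 : |w 0| * s ^ 3 ≤ |w 0| * ((g + σ * μ) * (-p₀)) := by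
    have hs3 : 0 < s ^ 3 := by positivity
    have h5 : |y 0| * s ^ 3 ≤ |w 0| * (-p₀) := by
      calc |y 0| * s ^ 3 ≤ (|w 0| / s ^ 3 * -p₀) * s ^ 3 := by gcongr
        _ = |w 0| * (-p₀) := by field_simp
    calc |w 0| * s ^ 3 = (g + σ * μ) * (|y 0| * s ^ 3) := by
          conv_lhs => rw [hAe]
          ring
      _ ≤ (g + σ * μ) * (|w 0| * (-p₀)) := by gcongr
      _ = _ := by ring
  have h6 : s ^ 3 ≤ (g + σ * μ) * (-p₀) := le_of_mul_le_mul_left h4 hw0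
  have h7 : g + σ * μ ≤ (g + 2 * σ * C) * s ^ 2 := by
    have : σ * μ ≤ σ * (C * lam) := by gcongr
    have h8 : lam = 2 * s ^ 2 := by linarith
    rw [h8] at this
    have : g * 1 ≤ g * s ^ 2 := by
      gcongr
      nlinarith
    linarith
  have h9 : (g + σ * μ) * (-p₀) ≤ D * s ^ 2 := by
    have := mul_le_mul_of_nonneg_right h7 (by linarith : 0 ≤ -p₀)
    rw [hD]
    linarith
  have h10 : D * s ^ 2 < s * s ^ 2 := by
    have : 0 < s ^ 2 := by positivity
    gcongr
  linarith [pow_succ s 2, mul_comm s (s ^ 2)]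
end

section
/- Assume d + c·(coth(Θ₁k) + coth(Θ₂k))·k ≠ 0 for every integer k ≥ 1, and for such k set λ_k := c² / (d + c·(coth(Θ₁k) + coth(Θ₂k))·k). Then sup_{k ≥ 1} k²·|λ_{k+1} − λ_k| < ∞. -/
lemma coth_aux (t x : ℝ) (ht : 0 < t) (hx : 0 < x) :
    x ≤ Real.cosh (t * x) / Real.sinh (t * x) * x ∧
    Real.cosh (t * x) / Real.sinh (t * x) * x ≤ x + 1 / t := by
  have hy : 0 < t * x := mul_pos ht hx
  have hs : t * x < Real.sinh (t * x) := Real.self_lt_sinh_iff.mpr hy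
  have hs0 : 0 < Real.sinh (t * x) := hy.trans hs
  have he : Real.cosh (t * x) - Real.sinh (t * x) = Real.exp (-(t * x)) :=
    Real.cosh_sub_sinh _
  have he1 : Real.exp (-(t * x)) ≤ 1 := Real.exp_le_one_iff.mpr (by linarith)
  have he0 := Real.exp_pos (-(t * x))
  have e : Real.cosh (t * x) / Real.sinh (t * x) * x
      = x + Real.exp (-(t * x)) * x / Real.sinh (t * x) := by
    rw [← he]; field_simp; ring
  rw [e]
  constructor
  · have : 0 ≤ Real.exp (-(t * x)) * x / Real.sinh (t * x) := by positivity
    linarith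
  · have : Real.exp (-(t * x)) * x / Real.sinh (t * x) ≤ 1 / t := by
      rw [div_le_div_iff₀ hs0 ht]
      nlinarith
    linarith

lemma bdd_aux (f : ℕ → ℝ) (N : ℕ) (B : ℝ) (h : ∀ k, N ≤ k → f k ≤ B) :
    ∃ M : ℝ, ∀ k, f k ≤ M := by
  obtain ⟨A, hA⟩ := ((Set.finite_lt_nat N).image f).bddAbove
  refine ⟨max A B, fun k => ?_⟩
  rcases lt_or_ge k N with hk | hk
  · exact le_max_of_le_left (hA ⟨k, hk, rfl⟩)
  · exact le_max_of_le_right (h k hk)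

lemma quot_aux (c k C P Q : ℝ) (hc : 0 < c) (hk : 0 < k) (hP : c * k ≤ P) (hQ : c * k ≤ Q)
    (h : |Q - P| ≤ C) : k ^ 2 * |c ^ 2 / P - c ^ 2 / Q| ≤ C := by
  have hck : 0 < c * k := mul_pos hc hk
  have hP0 : 0 < P := hck.trans_le hP
  have hQ0 : 0 < Q := hck.trans_le hQ
  have e : c ^ 2 / P - c ^ 2 / Q = c ^ 2 * (Q - P) / (P * Q) := by
    field_simp
  have hm : (c * k) * (c * k) ≤ P * Q := mul_le_mul hP hQ hck.le hP0.le
  rw [e, abs_div, abs_mul, abs_of_pos (mul_pos hP0 hQ0), abs_of_pos (pow_pos hc 2),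
    ← mul_div_assoc, div_le_iff₀ (mul_pos hP0 hQ0)]
  have h0 := abs_nonneg (Q - P)
  calc k ^ 2 * (c ^ 2 * |Q - P|) = |Q - P| * ((c * k) * (c * k)) := by ring
    _ ≤ C * (P * Q) := mul_le_mul h hm (by positivity) (h0.trans h)

/-- With `λ_k := c² / (d + c(coth(Θ₁k)+coth(Θ₂k))k)` (defined whenever the
denominator does not vanish for integers `k ≥ 1`), one has
`sup_{k ≥ 1} k²·|λ_{k+1} − λ_k| < ∞`. -/
theorem stmt_16 (c d Θ₁ Θ₂ : ℝ) (hc : 0 < c) (hΘ₁ : 0 < Θ₁) (hΘ₂ : 0 < Θ₂)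
    (hden : ∀ k : ℕ, 1 ≤ k →
      d + c * (Real.cosh (Θ₁ * k) / Real.sinh (Θ₁ * k)
        + Real.cosh (Θ₂ * k) / Real.sinh (Θ₂ * k)) * k ≠ 0) :
    ∃ M : ℝ, ∀ k : ℕ, 1 ≤ k →
      (k : ℝ) ^ 2 *
        |c ^ 2 / (d + c * (Real.cosh (Θ₁ * (k + 1)) / Real.sinh (Θ₁ * (k + 1))
            + Real.cosh (Θ₂ * (k + 1)) / Real.sinh (Θ₂ * (k + 1))) * (k + 1))
          - c ^ 2 / (d + c * (Real.cosh (Θ₁ * k) / Real.sinh (Θ₁ * k)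
            + Real.cosh (Θ₂ * k) / Real.sinh (Θ₂ * k)) * k)| ≤ M := by
  obtain ⟨N, hN⟩ := exists_nat_ge (|d| / c)
  have key := bdd_aux (fun k : ℕ => (k : ℝ) ^ 2 *
        |c ^ 2 / (d + c * (Real.cosh (Θ₁ * (k + 1)) / Real.sinh (Θ₁ * (k + 1))
            + Real.cosh (Θ₂ * (k + 1)) / Real.sinh (Θ₂ * (k + 1))) * (k + 1))
          - c ^ 2 / (d + c * (Real.cosh (Θ₁ * k) / Real.sinh (Θ₁ * k)
            + Real.cosh (Θ₂ * k) / Real.sinh (Θ₂ * k)) * k)|) (N + 1)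
      (c * (2 + 1 / Θ₁ + 1 / Θ₂)) ?_
  · obtain ⟨M, hM⟩ := key
    exact ⟨M, fun k _ => hM k⟩
  intro k hk
  have hk1 : (N : ℝ) + 1 ≤ k := by exact_mod_cast hk
  have hN0 : (0 : ℝ) ≤ N := Nat.cast_nonneg N
  have hk0 : (0 : ℝ) < k := by linarith
  have hd : |d| ≤ c * k := by
    rw [div_le_iff₀ hc] at hN
    nlinarith
  have hd' := neg_abs_le d
  obtain ⟨a1, a2⟩ := coth_aux Θ₁ k hΘ₁ hk0
  obtain ⟨b1, b2⟩ := coth_aux Θ₂ k hΘ₂ hk0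
  obtain ⟨p1, p2⟩ := coth_aux Θ₁ (k + 1) hΘ₁ (by linarith)
  obtain ⟨q1, q2⟩ := coth_aux Θ₂ (k + 1) hΘ₂ (by linarith)
  have t1 : 0 < 1 / Θ₁ := by positivity
  have t2 : 0 < 1 / Θ₂ := by positivity
  rw [mul_assoc c, mul_assoc c, add_mul, add_mul]
  generalize 1 / Θ₁ = u at *
  generalize 1 / Θ₂ = v at *
  generalize Real.cosh (Θ₁ * k) / Real.sinh (Θ₁ * k) * k = A at *
  generalize Real.cosh (Θ₂ * k) / Real.sinh (Θ₂ * k) * k = B at *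
  generalize Real.cosh (Θ₁ * (k + 1)) / Real.sinh (Θ₁ * (k + 1)) * ((k : ℝ) + 1) = P at *
  generalize Real.cosh (Θ₂ * (k + 1)) / Real.sinh (Θ₂ * (k + 1)) * ((k : ℝ) + 1) = Q at *
  apply quot_aux c k _ _ _ hc hk0
  · nlinarith
  · nlinarith
  · have e : d + c * (A + B) - (d + c * (P + Q)) = c * (A + B - (P + Q)) := by ring
    rw [e, abs_mul, abs_of_pos hc]
    apply mul_le_mul_of_nonneg_left _ hc.le
    rw [abs_le]
    constructor <;> linarith
end

section
/- Let I ⊆ ℝ be an open interval, γ ≠ 0, k ∈ ℝ, β, δ ∈ ℝ, and let a : I → (0,∞) be differentiable with a′(p) = −γ/a(p) for all p ∈ I. Define z : I → ℝ by z(p) := (2γ/a(p))·(β·e^{−k·a(p)/γ} + δ·e^{k·a(p)/γ}). Then z is differentiable on I and the function p ↦ a(p)³·z′(p) is differentiable on I with derivative k²·a·z. -/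
open Set

/-- On an open interval `I = (x,y)`, if `a > 0` is differentiable with
`a′ = −γ/a`, then `z(p) := (2γ/a(p))·(β e^{−k a(p)/γ} + δ e^{k a(p)/γ})` is differentiable
on `I` and `p ↦ a(p)³ z′(p)` is differentiable on `I` with derivative `k² a z`. -/
theorem stmt_17 (x y γ k β δ : ℝ) (hγ : γ ≠ 0)
    (a : ℝ → ℝ) (ha : ∀ p ∈ Set.Ioo x y, HasDerivAt a (-γ / a p) p)
    (hapos : ∀ p ∈ Set.Ioo x y, 0 < a p) :
    ∃ z' : ℝ → ℝ,
      (∀ p ∈ Set.Ioo x y,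
        HasDerivAt
          (fun s => 2 * γ / a s * (β * Real.exp (-k * a s / γ) + δ * Real.exp (k * a s / γ)))
          (z' p) p) ∧
      (∀ p ∈ Set.Ioo x y,
        HasDerivAt (fun s => a s ^ 3 * z' s)
          (k ^ 2 * a p
            * (2 * γ / a p * (β * Real.exp (-k * a p / γ) + δ * Real.exp (k * a p / γ)))) p) := by
  have hem : ∀ p ∈ Set.Ioo x y, HasDerivAt (fun s => Real.exp (-k * a s / γ))
      (Real.exp (-k * a p / γ) * (-k * (-γ / a p) / γ)) p := fun p hp =>
    (((ha p hp).const_mul (-k)).div_const γ).exp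
  have hep : ∀ p ∈ Set.Ioo x y, HasDerivAt (fun s => Real.exp (k * a s / γ))
      (Real.exp (k * a p / γ) * (k * (-γ / a p) / γ)) p := fun p hp =>
    (((ha p hp).const_mul k).div_const γ).exp
  refine ⟨fun s => (2 * γ ^ 2 * (β * Real.exp (-k * a s / γ) + δ * Real.exp (k * a s / γ))
    - 2 * γ * k * (a s * (δ * Real.exp (k * a s / γ) - β * Real.exp (-k * a s / γ))))
      / a s ^ 3, ?_, ?_⟩
  · intro p hp
    have h0 : a p ≠ 0 := (hapos p hp).ne'
    have h := ((hasDerivAt_const p (2 * γ)).fun_div (ha p hp) h0).fun_mul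
      (((hem p hp).const_mul β).fun_add ((hep p hp).const_mul δ))
    refine h.congr_deriv ?_
    beta_reduce
    generalize Real.exp (-k * a p / γ) = u
    generalize Real.exp (k * a p / γ) = v
    field_simp
    ring
  · intro p hp
    have h0 : a p ≠ 0 := (hapos p hp).ne'
    have h := ((((hem p hp).const_mul β).fun_add ((hep p hp).const_mul δ)).const_mul
      (2 * γ ^ 2)).fun_sub (((ha p hp).fun_mul
        (((hep p hp).const_mul δ).fun_sub ((hem p hp).const_mul β))).const_mul (2 * γ * k))
    refine (h.congr_deriv ?_).congr_of_eventuallyEq ?_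
    · generalize Real.exp (-k * a p / γ) = u
      generalize Real.exp (k * a p / γ) = v
      field_simp
      ring
    · filter_upwards [isOpen_Ioo.mem_nhds hp] with s hs
      exact mul_div_cancel₀ _ (pow_ne_zero 3 (hapos s hs).ne')
end
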